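/- arXiv:2512.22696 — 3 statements merged into one kernel-verified Lean document; each statement's English description precedes it below -/
import Mathlib

section
/- Let a, b, c be positive integers with c² = a² + b² + ab. Then the ideal trapezoid with shorter parallel side a² + b² and lateral sides ab (so with longer parallel side a² + b² + ab = c²) tiles into a² + b² + c² congruent copies of the triangle with side lengths (a, b, c). -/
noncomputable section

abbrev Plane := EuclideanSpace ℝ (Fin 2)

/-- The point (x, y) in the Euclidean plane. -/
def pt (x y : ℝ) : Plane := (WithLp.equiv 2 (Fin 2 → ℝ)).symm ![x, y]

/-- `Δ` is a triangle with side lengths `(p, q, r)`: the convex hull of points `P, Q, R`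
with `dist Q R = p`, `dist P R = q`, `dist P Q = r`. -/
def IsTriangle (p q r : ℝ) (Δ : Set Plane) : Prop :=
  ∃ P Q R : Plane, dist Q R = p ∧ dist P R = q ∧ dist P Q = r ∧
    Δ = convexHull ℝ {P, Q, R}

/-- `S` tiles into `N` congruent copies of the `(p, q, r)` triangle: there are isometries
`f 1, …, f N` of the plane and a triangle `Δ` with side lengths `(p, q, r)` such that
`S` is the union of the `f i '' Δ` and their interiors are pairwise disjoint. -/
def TilesInto (S : Set Plane) (N : ℕ) (p q r : ℝ) : Prop :=
  ∃ (f : Fin N → Plane ≃ᵢ Plane) (Δ : Set Plane),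
    IsTriangle p q r Δ ∧
    S = ⋃ i, f i '' Δ ∧
    ∀ i j : Fin N, i ≠ j → interior (f i '' Δ) ∩ interior (f j '' Δ) = ∅

/-- The ideal trapezoid with shorter parallel side `x` and lateral sides `ℓ`
(longer parallel side `x + ℓ`, base angles `π/3`). -/
def IdealTrapezoid (x ℓ : ℝ) : Set Plane :=
  convexHull ℝ {pt 0 0, pt (x + ℓ) 0, pt (x + ℓ/2) (ℓ * Real.sqrt 3 / 2),
    pt (ℓ/2) (ℓ * Real.sqrt 3 / 2)}

def Tl (S Δ : Set Plane) (N : ℕ) : Prop :=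
  ∃ (f : Fin N → Plane ≃ᵢ Plane), S = ⋃ i, f i '' Δ ∧
    ∀ i j : Fin N, i ≠ j → interior (f i '' Δ) ∩ interior (f j '' Δ) = ∅

lemma Tl.union {S S' Δ : Set Plane} {N M : ℕ} (h : Tl S Δ N) (h' : Tl S' Δ M)
    (hd : interior S ∩ interior S' = ∅) : Tl (S ∪ S') Δ (N + M) := by
  obtain ⟨f, hS, hf⟩ := h
  obtain ⟨g, hS', hg⟩ := h'
  have hfs : ∀ i, interior (f i '' Δ) ⊆ interior S := fun i =>
    interior_mono (by rw [hS]; exact Set.subset_iUnion (fun i => f i '' Δ) i)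
  have hgs : ∀ i, interior (g i '' Δ) ⊆ interior S' := fun i =>
    interior_mono (by rw [hS']; exact Set.subset_iUnion (fun i => g i '' Δ) i)
  have key : ∀ i j, interior (f i '' Δ) ∩ interior (g j '' Δ) = ∅ := fun i j =>
    Set.subset_empty_iff.1 (hd ▸ Set.inter_subset_inter (hfs i) (hgs j))
  refine ⟨Fin.append f g, ?_, ?_⟩
  · rw [hS, hS']
    ext x
    simp only [Set.mem_union, Set.mem_iUnion]
    constructor
    · rintro (⟨i, hi⟩ | ⟨i, hi⟩)
      · exact ⟨Fin.castAdd M i, by rwa [Fin.append_left]⟩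
      · exact ⟨Fin.natAdd N i, by rwa [Fin.append_right]⟩
    · rintro ⟨i, hi⟩
      induction i using Fin.addCases with
      | left i => left; exact ⟨i, by rwa [Fin.append_left] at hi⟩
      | right i => right; exact ⟨i, by rwa [Fin.append_right] at hi⟩
  · intro i j hij
    induction i using Fin.addCases with
    | left i =>
      induction j using Fin.addCases with
      | left j =>
        rw [Fin.append_left, Fin.append_left]
        exact hf i j (fun e => hij (by rw [e]))
      | right j =>
        rw [Fin.append_left, Fin.append_right]
        exact key i j
    | right i =>
      induction j using Fin.addCases with
      | left j =>
        rw [Fin.append_left, Fin.append_right, Set.inter_comm]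
        exact key j i
      | right j =>
        rw [Fin.append_right, Fin.append_right]
        exact hg i j (fun e => hij (by rw [e]))

lemma Tl.image {S Δ : Set Plane} {N : ℕ} (h : Tl S Δ N) (e : Plane ≃ᵢ Plane) :
    Tl (e '' S) Δ N := by
  obtain ⟨f, hS, hf⟩ := h
  have h1 : ∀ i, (f i).trans e '' Δ = e '' (f i '' Δ) := fun i => by
    rw [Set.image_image]; rfl
  refine ⟨fun i => (f i).trans e, ?_, ?_⟩
  · simp only [h1]
    rw [hS, Set.image_iUnion]
  · intro i j hij
    rw [h1, h1]
    have h2 : ∀ T : Set Plane, interior (e '' T) = e '' interior T := fun T =>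
      (e.toHomeomorph.image_interior T).symm
    rw [h2, h2, ← Set.image_inter e.injective, hf i j hij, Set.image_empty]

lemma Tl.single (Δ : Set Plane) (e : Plane ≃ᵢ Plane) : Tl (e '' Δ) Δ 1 := by
  refine ⟨fun _ => e, ?_, ?_⟩
  · rw [Set.iUnion_const]
  · intro i j hij
    exact absurd (Subsingleton.elim i j) hij

lemma sep {S S' : Set Plane} (g : Plane →ₗ[ℝ] ℝ) (u : Plane) (hu : 0 < g u) (c : ℝ)
    (h : ∀ x ∈ S, g x ≤ c) (h' : ∀ x ∈ S', c ≤ g x) : interior S ∩ interior S' = ∅ := by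
  rw [Set.eq_empty_iff_forall_notMem]
  rintro x ⟨hx, hx'⟩
  have hxc : g x = c := le_antisymm (h x (interior_subset hx)) (h' x (interior_subset hx'))
  have hcont : Filter.Tendsto (fun ε : ℝ => x + ε • u) (nhds 0) (nhds x) := by
    have : Continuous (fun ε : ℝ => x + ε • u) := by fun_prop
    simpa using this.tendsto 0
  have hev : ∀ᶠ ε in nhds (0 : ℝ), x + ε • u ∈ S :=
    hcont.eventually (mem_interior_iff_mem_nhds.1 hx)
  have hev2 : ∀ᶠ ε in nhdsWithin (0 : ℝ) (Set.Ioi 0), x + ε • u ∈ S ∧ 0 < ε :=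
    (hev.filter_mono nhdsWithin_le_nhds).and self_mem_nhdsWithin
  obtain ⟨ε, he, hpos⟩ := hev2.exists
  have := h _ he
  rw [map_add, map_smul, smul_eq_mul, hxc] at this
  nlinarith [mul_pos hpos hu]

lemma convex_comb4 {A B C D : Plane} (x : Plane) (p q r w : ℝ) (hp : 0 ≤ p) (hq : 0 ≤ q)
    (hr : 0 ≤ r) (hw : 0 ≤ w) (h1 : p + q + r + w = 1)
    (hx : x = p • A + q • B + r • C + w • D) : x ∈ convexHull ℝ {A, B, C, D} := by
  have hm : ∀ i : Fin 4, ![A, B, C, D] i ∈ ({A, B, C, D} : Set Plane) := by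
    intro i; fin_cases i <;> simp
  have := (convex_convexHull ℝ ({A, B, C, D} : Set Plane)).sum_mem
    (t := Finset.univ) (w := ![p, q, r, w]) (z := ![A, B, C, D])
    (by intro i _; fin_cases i <;> simp [*]) (by simp [Fin.sum_univ_four, h1])
    (fun i _ => subset_convexHull ℝ _ (hm i))
  rw [hx]
  simpa [Fin.sum_univ_four] using this

section grid
variable (s t : Plane →ₗ[ℝ] ℝ) (u v : Plane)

def Tri (r : ℝ) : Set Plane := {x | 0 ≤ s x ∧ 0 ≤ t x ∧ s x + t x ≤ r}

variable (hsu : s u = 1) (htu : t u = 0) (hsv : s v = 0) (htv : t v = 1)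

include hsu htu hsv htv

lemma tl_up (p q : ℝ) :
    Tl {x | p ≤ s x ∧ q ≤ t x ∧ s x + t x ≤ p + q + 1} (Tri s t 1) 1 := by
  convert Tl.single (Tri s t 1) (IsometryEquiv.addRight (p • u + q • v)) using 1
  ext x
  simp only [Set.mem_ofPred_eq, Set.mem_image, Tri, IsometryEquiv.addRight_apply]
  constructor
  · rintro ⟨h1, h2, h3⟩
    refine ⟨x - (p • u + q • v), ?_, by abel⟩
    simp only [map_sub, map_add, map_smul, smul_eq_mul, hsu, htu, hsv, htv]
    refine ⟨?_, ?_, ?_⟩ <;> linarith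
  · rintro ⟨y, ⟨h1, h2, h3⟩, rfl⟩
    simp only [map_add, map_smul, smul_eq_mul, hsu, htu, hsv, htv]
    refine ⟨?_, ?_, ?_⟩ <;> linarith

lemma tl_down (p q : ℝ) :
    Tl {x | s x ≤ p ∧ t x ≤ q ∧ p + q - 1 ≤ s x + t x} (Tri s t 1) 1 := by
  convert Tl.single (Tri s t 1) (IsometryEquiv.subLeft (p • u + q • v)) using 1
  ext x
  simp only [Set.mem_ofPred_eq, Set.mem_image, Tri, IsometryEquiv.subLeft_apply]
  constructor
  · rintro ⟨h1, h2, h3⟩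
    refine ⟨(p • u + q • v) - x, ?_, by abel⟩
    simp only [map_sub, map_add, map_smul, smul_eq_mul, hsu, htu, hsv, htv]
    refine ⟨?_, ?_, ?_⟩ <;> linarith
  · rintro ⟨y, ⟨h1, h2, h3⟩, rfl⟩
    simp only [map_sub, map_add, map_smul, smul_eq_mul, hsu, htu, hsv, htv]
    refine ⟨?_, ?_, ?_⟩ <;> linarith

lemma tl_strip (n : ℝ) (k : ℕ) :
    Tl {x | 0 ≤ t x ∧ n - k ≤ s x ∧ n ≤ s x + t x ∧ s x + t x ≤ n + 1}
      (Tri s t 1) (2 * k + 1) := by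
  induction k with
  | zero =>
    convert tl_up s t u v hsu htu hsv htv n 0 using 1
    ext x
    simp only [Set.mem_ofPred_eq, Nat.cast_zero]
    constructor
    · rintro ⟨h1, h2, h3, h4⟩
      refine ⟨?_, ?_, ?_⟩ <;> linarith
    · rintro ⟨h1, h2, h3⟩
      refine ⟨?_, ?_, ?_, ?_⟩ <;> linarith
  | succ k ih =>
    have hk : (0 : ℝ) ≤ k := Nat.cast_nonneg k
    have hd := tl_down s t u v hsu htu hsv htv (n - k) (k + 1)
    have hu := tl_up s t u v hsu htu hsv htv (n - k - 1) (k + 1)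
    have hdu := hd.union hu (sep t v (by rw [htv]; norm_num) (k + 1)
      (fun x hx => hx.2.1) (fun x hx => hx.2.1))
    have hall := hdu.union ih (sep s u (by rw [hsu]; norm_num) (n - k)
      (by
        rintro x (hx | hx)
        · exact hx.1
        · have := hx.2.1
          have := hx.2.2
          linarith)
      (fun x hx => hx.2.1))
    convert hall using 1
    · ext x
      simp only [Set.mem_ofPred_eq, Set.mem_union, Nat.cast_add, Nat.cast_one]
      constructor
      · rintro ⟨h1, h2, h3, h4⟩
        rcases le_total (s x) (n - k) with h5 | h5
        · left
          rcases le_total (t x) (k + 1) with h6 | h6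
          · left; refine ⟨?_, ?_, ?_⟩ <;> linarith
          · right; refine ⟨?_, ?_, ?_⟩ <;> linarith
        · right; refine ⟨?_, ?_, ?_, ?_⟩ <;> linarith
      · rintro ((⟨h1, h2, h3⟩ | ⟨h1, h2, h3⟩) | ⟨h1, h2, h3, h4⟩) <;>
          refine ⟨?_, ?_, ?_, ?_⟩ <;> linarith
    · ring

lemma tl_grid (n : ℕ) : Tl (Tri s t (n + 1)) (Tri s t 1) ((n + 1) ^ 2) := by
  induction n with
  | zero =>
    convert tl_up s t u v hsu htu hsv htv 0 0 using 1
    · simp [Tri]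
    · norm_num
  | succ n ih =>
    have hs := tl_strip s t u v hsu htu hsv htv (n + 1) (n + 1)
    have hall := ih.union hs (sep (s + t) u
      (by rw [LinearMap.add_apply, hsu, htu]; norm_num) (n + 1)
      (fun x hx => hx.2.2) (fun x hx => hx.2.2.1))
    convert hall using 1
    · ext x
      simp only [Set.mem_ofPred_eq, Set.mem_union, Tri, Nat.cast_add, Nat.cast_one]
      have hk : (0 : ℝ) ≤ n := Nat.cast_nonneg n
      constructor
      · rintro ⟨h1, h2, h3⟩
        rcases le_total (s x + t x) (n + 1) with h5 | h5
        · left; exact ⟨h1, h2, h5⟩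
        · right; refine ⟨?_, ?_, ?_, ?_⟩ <;> linarith
      · rintro (⟨h1, h2, h3⟩ | ⟨h1, h2, h3, h4⟩) <;>
          refine ⟨?_, ?_, ?_⟩ <;> linarith
    · ring

lemma tri_hull : convexHull ℝ {v, u, (0 : Plane)} ⊆ Tri s t 1 := by
  apply convexHull_min
  · rintro x (rfl | rfl | rfl) <;> simp [Tri, *]
  · intro x hx y hy α β hα hβ hαβ
    obtain ⟨h1, h2, h3⟩ := hx
    obtain ⟨h4, h5, h6⟩ := hy
    simp only [Tri, Set.mem_ofPred_eq, map_add, map_smul, smul_eq_mul]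
    refine ⟨by positivity, by positivity, ?_⟩
    nlinarith [mul_le_mul_of_nonneg_left h3 hα, mul_le_mul_of_nonneg_left h6 hβ]

lemma hull_tri (hx : ∀ x, x = s x • u + t x • v) :
    Tri s t 1 = convexHull ℝ {v, u, (0 : Plane)} := by
  refine Set.Subset.antisymm ?_ (tri_hull s t u v hsu htu hsv htv)
  rintro x ⟨h1, h2, h3⟩
  have := convex_comb4 (A := v) (B := u) (C := 0) (D := 0) x (t x) (s x) (1 - s x - t x) 0 h2 h1
    (by linarith) le_rfl (by ring) (by
      conv_lhs => rw [hx x]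
      simp [add_comm])
  simpa using this

end grid

lemma pt0 (x y : ℝ) : pt x y 0 = x := rfl
lemma pt1 (x y : ℝ) : pt x y 1 = y := rfl

lemma plane_ext {x y : Plane} (h0 : x 0 = y 0) (h1 : x 1 = y 1) : x = y := by
  ext i; fin_cases i <;> assumption

/-- planar isometry with linear part determined by `p, q, e` -/
def iso (p q e w0 w1 : ℝ) (hpq : p ^ 2 + q ^ 2 = 1) (he : e ^ 2 = 1) : Plane ≃ᵢ Plane :=
  IsometryEquiv.mk' (fun x => pt (p * x 0 - e * q * x 1 + w0) (q * x 0 + e * p * x 1 + w1))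
    (fun y => pt (p * (y 0 - w0) + q * (y 1 - w1)) (e * (-q * (y 0 - w0) + p * (y 1 - w1))))
    (by
      intro y
      apply plane_ext
      · simp only [pt0, pt1]
        linear_combination (y 0 - w0) * hpq + (q ^ 2 * (y 0 - w0) - q * p * (y 1 - w1)) * he
      · simp only [pt0, pt1]
        linear_combination (y 1 - w1) * hpq + (p ^ 2 * (y 1 - w1) - q * p * (y 0 - w0)) * he)
    (by
      apply Isometry.of_dist_eq
      intro x y
      simp only [EuclideanSpace.dist_eq, Fin.sum_univ_two, Real.dist_eq, sq_abs, pt0, pt1]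
      congr 1
      linear_combination ((x 0 - y 0) ^ 2 + e ^ 2 * (x 1 - y 1) ^ 2) * hpq
        + (x 1 - y 1) ^ 2 * he)

lemma mem_iso (p q e w0 w1 : ℝ) (hpq : p ^ 2 + q ^ 2 = 1) (he : e ^ 2 = 1) (S : Set Plane)
    (y : Plane) : y ∈ iso p q e w0 w1 hpq he '' S ↔
      pt (p * (y 0 - w0) + q * (y 1 - w1)) (e * (-q * (y 0 - w0) + p * (y 1 - w1))) ∈ S := by
  constructor
  · rintro ⟨x, hx, rfl⟩
    exact (congrArg (· ∈ S) ((iso p q e w0 w1 hpq he).symm_apply_apply x)).mpr hx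
  · intro h
    exact ⟨_, h, (iso p q e w0 w1 hpq he).apply_symm_apply y⟩

def lin (α β : ℝ) : Plane →ₗ[ℝ] ℝ where
  toFun x := α * x 0 + β * x 1
  map_add' x y := by simp; ring
  map_smul' m x := by simp; ring

lemma lin_apply (α β : ℝ) (x : Plane) : lin α β x = α * x 0 + β * x 1 := rfl


lemma trap_eq (x l : ℝ) (hx : 0 < x) (hl : 0 < l) :
    IdealTrapezoid x l = {y | 0 ≤ y 1 * (√3 / 3) ∧ y 1 * (√3 / 3) ≤ l / 2 ∧
      y 1 * (√3 / 3) ≤ y 0 ∧ y 1 * (√3 / 3) ≤ x + l - y 0} := by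
  have hr : √3 * √3 = 3 := Real.mul_self_sqrt (by norm_num)
  apply Set.Subset.antisymm
  · apply convexHull_min
    · have h1 : l * √3 / 2 * (√3 / 3) = l / 2 := by linear_combination l / 6 * hr
      rintro y (rfl | rfl | rfl | rfl) <;> simp only [Set.mem_ofPred_eq, pt0, pt1, h1] <;>
        refine ⟨?_, ?_, ?_, ?_⟩ <;> linarith
    · intro y hy z hz α β hα hβ hαβ
      obtain ⟨h1, h2, h3, h4⟩ := hy
      obtain ⟨k1, k2, k3, k4⟩ := hz
      have hβ' : β = 1 - α := by linarith
      simp only [Set.mem_ofPred_eq, PiLp.add_apply, PiLp.smul_apply, smul_eq_mul]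
      generalize √3 / 3 = ρ at *
      subst hβ'
      refine ⟨?_, ?_, ?_, ?_⟩
      · nlinarith [mul_le_mul_of_nonneg_left h1 hα, mul_le_mul_of_nonneg_left k1 hβ]
      · nlinarith [mul_le_mul_of_nonneg_left h2 hα, mul_le_mul_of_nonneg_left k2 hβ]
      · nlinarith [mul_le_mul_of_nonneg_left h3 hα, mul_le_mul_of_nonneg_left k3 hβ]
      · nlinarith [mul_le_mul_of_nonneg_left h4 hα, mul_le_mul_of_nonneg_left k4 hβ]
  · rintro y ⟨h1, h2, h3, h4⟩
    obtain ⟨z, hz⟩ : ∃ z, z = y 1 * (√3 / 3) := ⟨_, rfl⟩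
    have hy1 : y 1 = √3 * z := by rw [hz]; linear_combination -(y 1 / 3) * hr
    rw [← hz] at h1 h2 h3 h4
    -- height fraction and horizontal fraction
    obtain ⟨m, hm⟩ : ∃ m, m = 2 * z / l := ⟨_, rfl⟩
    have hmz : m * l = 2 * z := by rw [hm]; field_simp
    have hm0 : 0 ≤ m := by rw [hm]; positivity
    have hm1 : m ≤ 1 := by rw [hm, div_le_one hl]; linarith
    have hD : 0 < x + l - 2 * z := by linarith
    obtain ⟨n, hn⟩ : ∃ n, n = (y 0 - z) / (x + l - 2 * z) := ⟨_, rfl⟩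
    have hnz : n * (x + l - 2 * z) = y 0 - z := by rw [hn, div_mul_cancel₀ _ hD.ne']
    have hn0 : 0 ≤ n := by rw [hn]; apply div_nonneg <;> linarith
    have hn1 : n ≤ 1 := by rw [hn, div_le_one hD]; linarith
    apply convex_comb4 y ((1 - m) * (1 - n)) ((1 - m) * n) (m * n) (m * (1 - n))
    · apply mul_nonneg <;> linarith
    · apply mul_nonneg <;> linarith
    · apply mul_nonneg <;> linarith
    · apply mul_nonneg <;> linarith
    · ring
    · apply plane_ext
      · simp only [PiLp.add_apply, PiLp.smul_apply, smul_eq_mul, pt0]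
        linear_combination -hnz + (n - 1 / 2) * hmz
      · simp only [PiLp.add_apply, PiLp.smul_apply, smul_eq_mul, pt1, hy1]
        linear_combination -(√3 / 2) * hmz

lemma nn_iff {k m x y : ℝ} (hk : 0 < k) (hm : 0 < m) (h : k * x = m * y) : 0 ≤ x ↔ 0 ≤ y := by
  rw [← mul_nonneg_iff_of_pos_left hk, h, mul_nonneg_iff_of_pos_left hm]

lemma main_aux (a b c : ℝ) (ha : 0 < a) (hb : 0 < b) (hc : 0 < c)
    (h : c ^ 2 = a ^ 2 + b ^ 2 + a * b) (Δ : Set Plane) (Na Nb Nc : ℕ)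
    (hs : Plane →ₗ[ℝ] ℝ) (ht : Plane →ₗ[ℝ] ℝ)
    (es : hs = lin (1 / a) (-(√3 / 3) / a)) (et : ht = lin 0 (-2 * (√3 / 3) / b))
    (hA : Tl (Tri hs ht a) Δ Na) (hB : Tl (Tri hs ht b) Δ Nb) (hC : Tl (Tri hs ht c) Δ Nc) :
    Tl (IdealTrapezoid (a ^ 2 + b ^ 2) (a * b)) Δ (Na + Nb + Nc) := by
  have hr : √3 * √3 = 3 := Real.mul_self_sqrt (by norm_num)
  have hab : 0 < a * b := mul_pos ha hb
  -- left triangle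
  have L := hA.image (iso 1 0 1 (a * b / 2) (a * b * √3 / 2) (by norm_num) (by norm_num))
  have R := hB.image (iso (1 / 2) (-(√3 / 2)) 1 (a ^ 2 + b ^ 2 + a * b / 2) (a * b * √3 / 2)
    (by linear_combination hr / 4) (by norm_num))
  have M := hC.image (iso (-(b / 2 + a) / c) (-(b * √3 / 2) / c) (-1) (a * b / 2 + a ^ 2)
    (a * b * √3 / 2)
    (by field_simp; linear_combination b ^ 2 * hr - 4 * h) (by norm_num))
  have eL : iso 1 0 1 (a * b / 2) (a * b * √3 / 2) (by norm_num) (by norm_num) '' Tri hs ht a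
      = {y | y 1 * (√3 / 3) ≤ y 0 ∧ y 1 * (√3 / 3) ≤ a * b / 2 ∧
          b * y 0 ≤ (b + 2 * a) * (y 1 * (√3 / 3))} := by
    ext y
    rw [mem_iso]
    simp only [Tri, es, et, Set.mem_ofPred_eq, lin_apply, pt0, pt1]
    refine and_congr ?_ (and_congr ?_ ?_)
    · rw [← sub_nonneg (a := y 0), ← mul_nonneg_iff_of_pos_left ha]
      refine iff_of_eq (congrArg (0 ≤ ·) ?_)
      field_simp
      linear_combination a * b * hr
    · rw [← sub_nonneg (b := y 1 * (√3 / 3)), ← mul_nonneg_iff_of_pos_left hb]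
      rw [← mul_nonneg_iff_of_pos_left (two_pos (α := ℝ)) (b := a * b / 2 - _)]
      refine iff_of_eq (congrArg (0 ≤ ·) ?_)
      field_simp
      linear_combination 2 * a * b * hr
    · rw [← sub_nonneg, ← sub_nonneg (a := (b + 2 * a) * _), ← mul_nonneg_iff_of_pos_left hab]
      refine iff_of_eq (congrArg (0 ≤ ·) ?_)
      field_simp
      linear_combination (-(b + 2 * a) * a * b) * hr
  have eR : iso (1 / 2) (-(√3 / 2)) 1 (a ^ 2 + b ^ 2 + a * b / 2) (a * b * √3 / 2)
    (by linear_combination hr / 4) (by norm_num) '' Tri hs ht b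
      = {y | y 1 * (√3 / 3) ≤ a * b / 2 ∧ y 1 * (√3 / 3) ≤ c ^ 2 - y 0 ∧
          a * (c ^ 2 - y 0) ≤ (a + 2 * b) * (y 1 * (√3 / 3))} := by
    ext y
    rw [mem_iso]
    simp only [Tri, es, et, Set.mem_ofPred_eq, lin_apply, pt0, pt1]
    refine and_congr ?_ (and_congr ?_ ?_)
    · rw [← sub_nonneg (b := y 1 * (√3 / 3))]
      apply nn_iff ha two_pos
      field_simp
      linear_combination (-2 * y 0 + 5 * a * b + 2 * a ^ 2 + 2 * b ^ 2) * hr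
    · rw [← sub_nonneg (b := y 1 * (√3 / 3)), h]
      apply nn_iff hb one_pos
      field_simp
      linear_combination (4 * (a * b + a ^ 2 + b ^ 2 - y 0)) * hr
    · rw [← sub_nonneg, ← sub_nonneg (a := (a + 2 * b) * _), h]
      apply nn_iff hab one_pos
      field_simp
      linear_combination (-9 * a * b ^ 2 + 4 * a * y 0 - 6 * a ^ 2 * b - 4 * a ^ 3 + 2 * b * y 0 - 2 * b ^ 3) * hr
  have eM : iso (-(b / 2 + a) / c) (-(b * √3 / 2) / c) (-1) (a * b / 2 + a ^ 2)
    (a * b * √3 / 2)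
    (by field_simp; linear_combination b ^ 2 * hr - 4 * h) (by norm_num) '' Tri hs ht c
      = {y | (a + 2 * b) * (y 1 * (√3 / 3)) ≤ a * (c ^ 2 - y 0) ∧
          (b + 2 * a) * (y 1 * (√3 / 3)) ≤ b * y 0 ∧ 0 ≤ y 1 * (√3 / 3)} := by
    ext y
    rw [mem_iso]
    simp only [Tri, es, et, Set.mem_ofPred_eq, lin_apply, pt0, pt1]
    refine and_congr ?_ (and_congr ?_ ?_)
    · rw [← sub_nonneg (b := (a + 2 * b) * _), h]
      apply nn_iff (mul_pos ha hc) one_pos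
      field_simp
      linear_combination (2 * b * y 0 + 3 * a * b ^ 2) * hr
    · rw [← sub_nonneg (b := (b + 2 * a) * _)]
      apply nn_iff (mul_pos hb hc) one_pos
      field_simp
      linear_combination (4 * b * y 0) * hr
    · rw [← sub_nonneg]
      apply nn_iff (half_pos hab) hc
      field_simp
      linear_combination (12 * a * b - 8 * √3 * y 1) * h + (-3 * a * b ^ 3 - 4 * a * b * y 0 - 2 * b ^ 2 * y 0) * hr
  rw [eL] at L
  rw [eR] at R
  rw [eM] at M
  have key : ∀ y0 z : ℝ, z ≤ y0 → z ≤ a * b / 2 → b * y0 ≤ (b + 2 * a) * z →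
      (a + 2 * b) * z ≤ a * (c ^ 2 - y0) := by
    intro y0 z h1 h2 h3
    have : b * ((a + 2 * b) * z) ≤ b * (a * (c ^ 2 - y0)) := by
      rw [h]
      nlinarith [mul_le_mul_of_nonneg_left h3 ha.le,
        mul_le_mul_of_nonneg_left h2 (by positivity : 0 ≤ a ^ 2 + b ^ 2 + a * b)]
    exact le_of_mul_le_mul_left this hb
  have LM := L.union M (sep (lin b (-((b + 2 * a) * (√3 / 3)))) (pt 1 0)
    (by rw [lin_apply, pt0, pt1]; linarith) 0
    (fun y hy => by
      obtain ⟨h1, h2, h3⟩ := hy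
      rw [lin_apply]; linarith)
    (fun y hy => by
      obtain ⟨h1, h2, h3⟩ := hy
      rw [lin_apply]; linarith))
  have LMR := LM.union R (sep (lin a ((a + 2 * b) * (√3 / 3))) (pt 1 0)
    (by rw [lin_apply, pt0, pt1]; linarith) (a * c ^ 2)
    (fun y hy => by
      rw [lin_apply]
      rcases hy with ⟨h1, h2, h3⟩ | ⟨h1, h2, h3⟩
      · have := key _ _ h1 h2 h3
        linarith
      · linarith)
    (fun y hy => by
      obtain ⟨h1, h2, h3⟩ := hy
      rw [lin_apply]; linarith))
  have e : Na + Nb + Nc = Na + Nc + Nb := by ring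
  rw [e]
  convert LMR using 1
  rw [trap_eq _ _ (by positivity) hab]
  ext y
  simp only [Set.mem_ofPred_eq, Set.mem_union]
  generalize y 1 * (√3 / 3) = z
  generalize y 0 = y0
  rw [show a ^ 2 + b ^ 2 + a * b - y0 = c ^ 2 - y0 by rw [h]]
  constructor
  · rintro ⟨h1, h2, h3, h4⟩
    rcases le_total (b * y0) ((b + 2 * a) * z) with h5 | h5
    · left; left; exact ⟨h3, h2, h5⟩
    · rcases le_total (a * (c ^ 2 - y0)) ((a + 2 * b) * z) with h6 | h6
      · right; exact ⟨h2, h4, h6⟩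
      · left; right; exact ⟨h6, h5, h1⟩
  · rintro ((⟨h1, h2, h3⟩ | ⟨h1, h2, h3⟩) | ⟨h1, h2, h3⟩)
    · have h4 := key _ _ h1 h2 h3
      have h0 : 0 ≤ z := by
        by_contra hz
        push Not at hz
        nlinarith [mul_le_mul_of_nonneg_left h1 hb.le]
      refine ⟨h0, h2, h1, ?_⟩
      have : a * z ≤ a * (c ^ 2 - y0) := by nlinarith
      exact le_of_mul_le_mul_left this ha
    · refine ⟨h3, ?_, ?_, ?_⟩
      · have : (a + b) ^ 2 * z = (a + b) ^ 2 * z := rfl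
        have h7 : (2 * a ^ 2 + 2 * b ^ 2 + 2 * a * b) * z
            ≤ (2 * a ^ 2 + 2 * b ^ 2 + 2 * a * b) * (a * b / 2) := by
          nlinarith [mul_le_mul_of_nonneg_left h1 hb.le, mul_le_mul_of_nonneg_left h2 ha.le,
            congrArg (a * b * ·) h]
        exact le_of_mul_le_mul_left h7 (by positivity)
      · have : b * z ≤ b * y0 := by nlinarith
        exact le_of_mul_le_mul_left this hb
      · have : a * z ≤ a * (c ^ 2 - y0) := by nlinarith
        exact le_of_mul_le_mul_left this ha
    · have h0 : 0 ≤ z := by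
        by_contra hz
        push Not at hz
        nlinarith [mul_le_mul_of_nonneg_left h2 ha.le]
      refine ⟨h0, h1, ?_, h2⟩
      have h7 : a * z ≤ a * y0 := by
        nlinarith [mul_le_mul_of_nonneg_left h1 (by positivity : 0 ≤ 2 * (a + b)),
          congrArg (a * ·) h]
      exact le_of_mul_le_mul_left h7 ha

theorem stmt0 (a b c : ℕ) (ha : 0 < a) (hb : 0 < b) (hc : 0 < c)
    (h : c ^ 2 = a ^ 2 + b ^ 2 + a * b) :
    TilesInto (IdealTrapezoid ((a : ℝ) ^ 2 + (b : ℝ) ^ 2) ((a : ℝ) * b))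
      (a ^ 2 + b ^ 2 + c ^ 2) a b c := by
  have hr : √3 * √3 = 3 := Real.mul_self_sqrt (by norm_num)
  have ha' : (0 : ℝ) < a := by exact_mod_cast ha
  have hb' : (0 : ℝ) < b := by exact_mod_cast hb
  have hc' : (0 : ℝ) < c := by exact_mod_cast hc
  have h' : (c : ℝ) ^ 2 = (a : ℝ) ^ 2 + (b : ℝ) ^ 2 + a * b := by exact_mod_cast h
  obtain ⟨s, es⟩ : ∃ s, s = lin (1 / (a : ℝ)) (-(√3 / 3) / a) := ⟨_, rfl⟩
  obtain ⟨t, et⟩ : ∃ t, t = lin 0 (-2 * (√3 / 3) / (b : ℝ)) := ⟨_, rfl⟩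
  obtain ⟨u, eu⟩ : ∃ u, u = pt (a : ℝ) 0 := ⟨_, rfl⟩
  obtain ⟨v, ev⟩ : ∃ v, v = pt (-(b : ℝ) / 2) (-(b * √3 / 2)) := ⟨_, rfl⟩
  have hsu : s u = 1 := by
    rw [es, eu, lin_apply, pt0, pt1]; field_simp; ring
  have htu : t u = 0 := by
    rw [et, eu, lin_apply, pt0, pt1]; ring
  have hsv : s v = 0 := by
    rw [es, ev, lin_apply, pt0, pt1]; field_simp; linear_combination (b : ℝ) * hr
  have htv : t v = 1 := by
    rw [et, ev, lin_apply, pt0, pt1]; field_simp; linear_combination 2 * hr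
  have hg : ∀ n : ℕ, 0 < n → Tl (Tri s t n) (Tri s t 1) (n ^ 2) := by
    intro n hn
    obtain ⟨m, rfl⟩ : ∃ m, n = m + 1 := ⟨n - 1, by omega⟩
    have := tl_grid s t u v hsu htu hsv htv m
    exact_mod_cast this
  obtain ⟨f, hf1, hf2⟩ := main_aux a b c ha' hb' hc' h' (Tri s t 1) _ _ _ s t es et
    (hg a ha) (hg b hb) (hg c hc)
  refine ⟨f, Tri s t 1, ⟨v, u, 0, ?_, ?_, ?_, ?_⟩, hf1, hf2⟩
  · rw [EuclideanSpace.dist_eq, eu, Fin.sum_univ_two, Real.sqrt_eq_iff_mul_self_eq (by positivity) ha'.le]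
    simp only [Real.dist_eq, sq_abs, pt0, pt1, PiLp.zero_apply]
    ring
  · rw [EuclideanSpace.dist_eq, ev, Fin.sum_univ_two, Real.sqrt_eq_iff_mul_self_eq (by positivity) hb'.le]
    simp only [Real.dist_eq, sq_abs, pt0, pt1, PiLp.zero_apply]
    linear_combination (b : ℝ) ^ 2 / 4 * hr
  · rw [EuclideanSpace.dist_eq, eu, ev, Fin.sum_univ_two, Real.sqrt_eq_iff_mul_self_eq (by positivity) hc'.le]
    simp only [Real.dist_eq, sq_abs, pt0, pt1]
    linear_combination (b : ℝ) ^ 2 / 4 * hr - h'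
  · apply hull_tri s t u v hsu htu hsv htv
    intro x
    apply plane_ext
    · simp only [PiLp.add_apply, PiLp.smul_apply, smul_eq_mul, es, et, eu, ev, lin_apply, pt0, pt1]
      field_simp
      ring
    · simp only [PiLp.add_apply, PiLp.smul_apply, smul_eq_mul, es, et, eu, ev, lin_apply, pt0, pt1]
      field_simp
      linear_combination -2 * a * (x 1) * hr
end
end

section
/- Let a, b, c be pairwise coprime positive integers with c² = a² + b² + ab, and let M = 3·⌈(c² − a − b)/(ab)⌉. Then for every integer m ≥ M, the equilateral triangle with side length m·ab tiles into m²·ab congruent copies of the triangle with side lengths (a, b, c). -/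
noncomputable section

/-- The equilateral triangle with side length `X`. -/
def EquilateralTri (X : ℝ) : Set Plane :=
  convexHull ℝ {pt 0 0, pt X 0, pt (X/2) (X * Real.sqrt 3 / 2)}

/-- Triangular region with corner `P` and edge vectors `k•u`, `k•v`. -/
def TriS (P u v : Plane) (k : ℝ) : Set Plane :=
  {x | ∃ s t : ℝ, 0 ≤ s ∧ 0 ≤ t ∧ s + t ≤ k ∧ x = P + s • u + t • v}

/-- Parallelogram region. -/
def ParS (P u v : Plane) (k l : ℝ) : Set Plane :=
  {x | ∃ s t : ℝ, 0 ≤ s ∧ s ≤ k ∧ 0 ≤ t ∧ t ≤ l ∧ x = P + s • u + t • v}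

/-- Trapezoid region of height `k` and bottom `l`. -/
def TrapS (P u v : Plane) (k l : ℝ) : Set Plane :=
  {x | ∃ s t : ℝ, 0 ≤ s ∧ 0 ≤ t ∧ t ≤ k ∧ s + t ≤ l ∧ x = P + s • u + t • v}

/-- `S` is a union of `N` tiles. -/
def Cov (a b c : ℝ) (S : Set Plane) (N : ℕ) : Prop :=
  ∃ (P u v : Fin N → Plane), (∀ i, ‖u i‖ = a ∧ ‖v i‖ = b ∧ ‖u i - v i‖ = c) ∧
    S = ⋃ i, TriS (P i) (u i) (v i) 1

lemma Cov.union {a b c : ℝ} {S T : Set Plane} {M N : ℕ} (hS : Cov a b c S M)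
    (hT : Cov a b c T N) : Cov a b c (S ∪ T) (M + N) := by
  obtain ⟨P, u, v, h, rfl⟩ := hS
  obtain ⟨P', u', v', h', rfl⟩ := hT
  refine ⟨Fin.append P P', Fin.append u u', Fin.append v v', ?_, ?_⟩
  · intro i
    refine Fin.addCases (fun i => ?_) (fun i => ?_) i
    · simpa using h i
    · simpa using h' i
  · ext x
    simp only [Set.mem_union, Set.mem_iUnion]
    constructor
    · rintro (⟨i, hi⟩ | ⟨i, hi⟩)
      · exact ⟨Fin.castAdd _ i, by simpa using hi⟩
      · exact ⟨Fin.natAdd _ i, by simpa using hi⟩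
    · rintro ⟨i, hi⟩
      revert hi
      refine Fin.addCases (fun i => ?_) (fun i => ?_) i
      · intro hi; left; exact ⟨i, by simpa using hi⟩
      · intro hi; right; exact ⟨i, by simpa using hi⟩

lemma Cov.tile {a b c : ℝ} {P u v : Plane} (hu : ‖u‖ = a) (hv : ‖v‖ = b) (huv : ‖u - v‖ = c) :
    Cov a b c (TriS P u v 1) 1 :=
  ⟨fun _ => P, fun _ => u, fun _ => v, fun _ => ⟨hu, hv, huv⟩, (Set.iUnion_const _).symm⟩

section grid
variable {a b c : ℝ} {u v : Plane} (hu : ‖u‖ = a) (hv : ‖v‖ = b) (huv : ‖u - v‖ = c)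
include hu hv huv

lemma Cov.par11 (P : Plane) : Cov a b c (ParS P u v 1 1) 2 := by
  have h1 := Cov.tile (P := P) hu hv huv
  have h2 := Cov.tile (a := a) (b := b) (c := c) (P := P + u + v) (u := -u) (v := -v) (by rwa [norm_neg]) (by rwa [norm_neg])
    (by rw [← norm_neg]; exact (congrArg _ (by module)).trans huv)
  convert h1.union h2 using 1
  ext x
  constructor
  · rintro ⟨s, t, h1, h2, h3, h4, rfl⟩
    by_cases h : s + t ≤ 1
    · left; exact ⟨s, t, h1, h3, h, rfl⟩
    · right; exact ⟨1 - s, 1 - t, by linarith, by linarith, by linarith, by module⟩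
  · rintro (⟨s, t, h1, h2, h3, rfl⟩ | ⟨s, t, h1, h2, h3, rfl⟩)
    · exact ⟨s, t, h1, by linarith, h2, by linarith, rfl⟩
    · exact ⟨1 - s, 1 - t, by linarith, by linarith, by linarith, by linarith, by module⟩

end grid

lemma Cov.par_add {a b c : ℝ} {P u v : Plane} {k k' l : ℝ} {M N : ℕ} (hk : 0 ≤ k) (hk' : 0 ≤ k')
    (h1 : Cov a b c (ParS P u v k l) M) (h2 : Cov a b c (ParS (P + k • u) u v k' l) N) :
    Cov a b c (ParS P u v (k + k') l) (M + N) := by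
  convert h1.union h2 using 1
  ext x
  constructor
  · rintro ⟨s, t, h1, h2, h3, h4, rfl⟩
    by_cases h : s ≤ k
    · left; exact ⟨s, t, h1, h, h3, h4, rfl⟩
    · right; exact ⟨s - k, t, by linarith, by linarith, h3, h4, by module⟩
  · rintro (⟨s, t, h1, h2, h3, h4, rfl⟩ | ⟨s, t, h1, h2, h3, h4, rfl⟩)
    · exact ⟨s, t, h1, by linarith, h3, h4, rfl⟩
    · exact ⟨s + k, t, by linarith, by linarith, by linarith, by linarith, by module⟩

lemma ParS_swap (P u v : Plane) (k l : ℝ) : ParS P u v k l = ParS P v u l k := by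
  ext x
  constructor <;>
  · rintro ⟨s, t, h1, h2, h3, h4, rfl⟩
    exact ⟨t, s, h3, h4, h1, h2, by module⟩

/-- The degenerate strips are handled by starting inductions at one. -/
lemma Cov.par_mul {a b c : ℝ} {u v : Plane} {k l : ℝ} {M : ℕ} (hk : 0 ≤ k)
    (h1 : ∀ P, Cov a b c (ParS P u v k l) M) (n : ℕ) (P : Plane) :
    Cov a b c (ParS P u v ((n + 1 : ℕ) * k) l) ((n + 1) * M) := by
  induction n generalizing P with
  | zero => simpa using h1 P
  | succ n ih =>
    have := Cov.par_add (by positivity) hk (ih P) (h1 _)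
    convert this using 2
    · push_cast; ring
    · ring

lemma Cov.grid {a b c : ℝ} {u v : Plane} (hu : ‖u‖ = a) (hv : ‖v‖ = b) (huv : ‖u - v‖ = c)
    {n m : ℕ} (hn : 0 < n) (hm : 0 < m) (P : Plane) : Cov a b c (ParS P u v n m) (2 * n * m) := by
  obtain ⟨n, rfl⟩ := Nat.exists_eq_succ_of_ne_zero hn.ne'
  obtain ⟨m, rfl⟩ := Nat.exists_eq_succ_of_ne_zero hm.ne'
  have h1 := Cov.par_mul zero_le_one (Cov.par11 hu hv huv) n
  have h2 := Cov.par_mul (u := v) (v := u) (k := 1) (l := (n + 1 : ℕ) * 1) zero_le_one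
    (fun P => by rw [ParS_swap]; exact h1 P) m P
  rw [ParS_swap]
  have e : 2 * n.succ * m.succ = (m + 1) * ((n + 1) * 2) := by
    simp only [Nat.succ_eq_add_one]; ring
  rw [e]
  simpa using h2

lemma Cov.gridTri {a b c : ℝ} {u v : Plane} (hu : ‖u‖ = a) (hv : ‖v‖ = b) (huv : ‖u - v‖ = c)
    {n : ℕ} (hn : 0 < n) (P : Plane) : Cov a b c (TriS P u v n) (n ^ 2) := by
  obtain ⟨n, rfl⟩ := Nat.exists_eq_succ_of_ne_zero hn.ne'
  clear hn
  induction n generalizing P with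
  | zero => simpa using Cov.tile (P := P) hu hv huv
  | succ n ih =>
    have h1 := Cov.grid hu hv huv (Nat.one_pos) (Nat.succ_pos n) P
    have h2 := Cov.tile (P := P + (n + 1 : ℝ) • v) hu hv huv
    have h3 := ih (P + u)
    convert (h1.union h2).union h3 using 1
    · ext x
      constructor
      · rintro ⟨s, t, h1, h2, h3, rfl⟩
        push_cast at h3
        by_cases h : s ≤ 1
        · left
          by_cases h' : t ≤ n + 1
          · left; exact ⟨s, t, h1, by simpa using h, h2, by simpa using h', rfl⟩
          · right; exact ⟨s, t - (n + 1), h1, by linarith, by linarith, by module⟩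
        · right; exact ⟨s - 1, t, by linarith, h2, by push_cast; linarith, by module⟩
      · have : (0 : ℝ) ≤ n := Nat.cast_nonneg n
        rintro ((⟨s, t, h1, h2, h3, h4, rfl⟩ | ⟨s, t, h1, h2, h3, rfl⟩) | ⟨s, t, h1, h2, h3, rfl⟩)
        · push_cast at h2 h4
          exact ⟨s, t, h1, h3, by push_cast; linarith, rfl⟩
        · exact ⟨s, t + (n + 1), h1, by linarith, by push_cast; linarith, by module⟩
        · push_cast at h3
          exact ⟨s + 1, t, by linarith, h2, by push_cast; linarith, by module⟩
    · simp only [Nat.succ_eq_add_one]; ring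

lemma norm_comb {u v : Plane} (hu : ‖u‖ = 1) (hv : ‖v‖ = 1) (huv : inner ℝ u v = (1 / 2 : ℝ))
    (x y z : ℝ) (hz : 0 ≤ z) (h : z ^ 2 = x ^ 2 + y ^ 2 + x * y) : ‖x • u + y • v‖ = z := by
  rw [← sq_eq_sq₀ (norm_nonneg _) hz, h, norm_add_sq_real, norm_smul, norm_smul, hu, hv,
    inner_smul_left, inner_smul_right, huv]
  simp only [Real.norm_eq_abs, mul_one, sq_abs, conj_trivial]
  ring

section lat
variable {a b c : ℕ} (ha : 0 < a) (hb : 0 < b) (hc : 0 < c) (h : c ^ 2 = a ^ 2 + b ^ 2 + a * b)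
  {u v : Plane} (hu : ‖u‖ = 1) (hv : ‖v‖ = 1) (huv : inner ℝ u v = (1 / 2 : ℝ))
include ha hb hc h hu hv huv

lemma Cov.parA {i j : ℕ} (hi : 0 < i) (hj : 0 < j) (P : Plane) :
    Cov a b c (ParS P u v (i * a) (j * b)) (2 * i * j) := by
  have h' : (c : ℝ) ^ 2 = a ^ 2 + b ^ 2 + a * b := by exact_mod_cast h
  have h0 : (a : ℝ) ≠ 0 := by positivity
  have h0' : (b : ℝ) ≠ 0 := by positivity
  have key := Cov.grid (a := a) (b := b) (c := c) (u := -(a : ℝ) • u) (v := (b : ℝ) • v)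
    (by simp [norm_smul, hu]) (by simp [norm_smul, hv])
    (by
      have := norm_comb hu hv huv (-a) (-b) c (by positivity) (by rw [h']; ring)
      rw [← this]; congr 1; module) hi hj (P + (i * a : ℝ) • u)
  convert key using 1
  ext x
  constructor
  · rintro ⟨s, t, h1, h2, h3, h4, rfl⟩
    refine ⟨i - s / a, t / b, ?_, ?_, by positivity, ?_, ?_⟩
    · rw [sub_nonneg, div_le_iff₀ (by positivity)]; exact h2
    · have : 0 ≤ s / a := by positivity
      linarith
    · rw [div_le_iff₀ (by positivity)]; exact h4
    · match_scalars <;> field_simp <;> ring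
  · rintro ⟨s, t, h1, h2, h3, h4, rfl⟩
    refine ⟨i * a - s * a, t * b, ?_, ?_, by positivity, ?_, ?_⟩
    · rw [sub_nonneg]; gcongr
    · have : 0 ≤ s * a := by positivity
      linarith
    · gcongr
    · module

lemma Cov.unitTrap (P : Plane) :
    Cov a b c (TrapS P u v (a * b) (c ^ 2)) (a ^ 2 + c ^ 2 + b ^ 2) := by
  have h' : (c : ℝ) ^ 2 = a ^ 2 + b ^ 2 + a * b := by exact_mod_cast h
  have a0 : (0 : ℝ) < a := by positivity
  have b0 : (0 : ℝ) < b := by positivity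
  have c0 : (0 : ℝ) < c := by positivity
  have k2 := Cov.gridTri (a := a) (b := b) (c := c) (u := (a : ℝ) • u) (v := -(b : ℝ) • v)
    (by simp [norm_smul, hu]) (by simp [norm_smul, hv])
    (by
      have := norm_comb hu hv huv a b c (by positivity) (by rw [h'])
      rw [← this]; congr 1; module) ha (P + (a * b : ℝ) • v)
  have k3 := Cov.gridTri (a := a) (b := b) (c := c) (u := (a : ℝ) • u + (-a : ℝ) • v)
    (v := -(b : ℝ) • u)
    (norm_comb hu hv huv _ _ _ (by positivity) (by ring)) (by simp [norm_smul, hu])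
    (by
      have := norm_comb hu hv huv (a + b) (-a) c (by positivity) (by rw [h']; ring)
      rw [← this]; congr 1; module) hb (P + (a * b : ℝ) • v + (a ^ 2 + b ^ 2 : ℝ) • u)
  have k1 := Cov.gridTri (a := a) (b := b) (c := c)
    (u := (-(a / c * a) : ℝ) • u + (-(a / c * b) : ℝ) • v)
    (v := (b / c * (a + b) : ℝ) • u + (-(b / c * a) : ℝ) • v)
    (norm_comb hu hv huv _ _ _ (by positivity) (by field_simp; rw [h']))
    (norm_comb hu hv huv _ _ _ (by positivity) (by field_simp; rw [h']; ring))
    (by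
      have := norm_comb hu hv huv (-c) 0 c (by positivity) (by ring)
      refine (congrArg _ ?_).trans this
      match_scalars
      · field_simp; rw [h']; ring
      · field_simp; ring) hc (P + (a * b : ℝ) • v + (a ^ 2 : ℝ) • u)
  convert (k2.union k1).union k3 using 1
  ext x
  constructor
  · rintro ⟨s, t, h1, h2, h3, h4, rfl⟩
    by_cases hA : s / a ≤ t / b
    · left; left
      refine ⟨s / a, a - t / b, by positivity, ?_, by linarith, ?_⟩
      · rw [sub_nonneg, div_le_iff₀ b0]; exact h3
      · match_scalars <;> field_simp <;> ring
    by_cases hB : (c ^ 2 - s - t) / b ≤ t / a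
    · right
      refine ⟨b - t / a, (c ^ 2 - s - t) / b, ?_, div_nonneg (by linarith) b0.le, by linarith, ?_⟩
      · rw [sub_nonneg, div_le_iff₀ a0]; linarith
      · match_scalars <;> field_simp <;> simp [h'] <;> ring
    · left; right
      push Not at hA hB
      rw [div_lt_div_iff₀ b0 a0] at hA
      rw [div_lt_div_iff₀ a0 b0] at hB
      have e : (c : ℝ) * (1 - t / (a * b)) - (s - a * t / b) / c
          = ((c ^ 2 - s - t) * a - t * b) / (a * c) := by
        field_simp
        rw [h']; ring
      refine ⟨c * (1 - t / (a * b)) - (s - a * t / b) / c, (s - a * t / b) / c, ?_, ?_, ?_, ?_⟩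
      · rw [e]; exact div_nonneg (by linarith) (by positivity)
      · apply div_nonneg _ c0.le
        rw [sub_nonneg, div_le_iff₀ b0]; linarith
      · have : 0 ≤ c * (t / (a * b)) := by positivity
        linarith
      · rw [e]
        match_scalars
        · field_simp
        · field_simp
          rw [h']
          ring
        · field_simp
          rw [h']
          ring
  · rintro ((⟨s, t, h1, h2, h3, rfl⟩ | ⟨s, t, h1, h2, h3, rfl⟩) | ⟨s, t, h1, h2, h3, rfl⟩)
    · refine ⟨s * a, a * b - t * b, by positivity, ?_, ?_, ?_, by module⟩
      · nlinarith
      · nlinarith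
      · rw [h']; nlinarith [mul_nonneg h2 b0.le]
    · obtain ⟨σ, rfl⟩ : ∃ σ, s = c * σ := ⟨s / c, by field_simp⟩
      obtain ⟨τ, rfl⟩ : ∃ τ, t = c * τ := ⟨t / c, by field_simp⟩
      have h1 : 0 ≤ σ := nonneg_of_mul_nonneg_right h1 c0
      have h2 : 0 ≤ τ := nonneg_of_mul_nonneg_right h2 c0
      have h3 : σ + τ ≤ 1 := by
        have : c * (σ + τ) ≤ c * 1 := by linarith
        exact le_of_mul_le_mul_left this c0
      refine ⟨a ^ 2 * (1 - σ) + τ * b * (a + b), a * b * (1 - σ - τ), ?_, ?_, ?_, ?_, ?_⟩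
      · have : 0 ≤ 1 - σ := by linarith
        positivity
      · have : 0 ≤ 1 - σ - τ := by linarith
        positivity
      · have : 0 ≤ a * b * (σ + τ) := by positivity
        linarith
      · rw [h']
        have : 0 ≤ (a * a + a * b) * σ := by positivity
        have : 0 ≤ (b * b) * (1 - τ) := mul_nonneg (by positivity) (by linarith)
        linarith
      · match_scalars <;> field_simp <;> ring
    · refine ⟨a ^ 2 + b ^ 2 + s * a - t * b, a * b - s * a, ?_, ?_, ?_, ?_, by module⟩
      · nlinarith [mul_nonneg h1 a0.le, mul_nonneg h1 b0.le]
      · nlinarith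
      · nlinarith
      · rw [h']; nlinarith

lemma Cov.trap1 {i j S : ℕ} (hS : S * (a * b) = a ^ 2 + b ^ 2 + i * a + j * b) (P : Plane) :
    Cov a b c (TrapS P u v (a * b) ((S + 1) * (a * b))) (a * b * (2 * S + 1)) := by
  have h' : (c : ℝ) ^ 2 = a ^ 2 + b ^ 2 + a * b := by exact_mod_cast h
  have hS' : (S : ℝ) * (a * b) = a ^ 2 + b ^ 2 + i * a + j * b := by exact_mod_cast hS
  have huv' : inner ℝ v u = (1 / 2 : ℝ) := by rw [real_inner_comm, huv]
  have ext1 : ∀ (k : ℝ) (l : ℝ) (N M : ℕ) (P : Plane), 0 ≤ k → (a * b : ℝ) ≤ l →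
      Cov a b c (ParS P u v k (a * b)) N →
      Cov a b c (TrapS (P + k • u) u v (a * b) l) M →
      Cov a b c (TrapS P u v (a * b) (l + k)) (N + M) := by
    intro k l N M P hk hl h1 h2
    convert h1.union h2 using 1
    ext x
    constructor
    · rintro ⟨s, t, h1, h2, h3, h4, rfl⟩
      by_cases hA : s ≤ k
      · left; exact ⟨s, t, h1, hA, h2, h3, rfl⟩
      · right; exact ⟨s - k, t, by linarith, h2, h3, by linarith, by module⟩
    · rintro (⟨s, t, h1, h2, h3, h4, rfl⟩ | ⟨s, t, h1, h2, h3, h4, rfl⟩)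
      · exact ⟨s, t, h1, h3, h4, by linarith, rfl⟩
      · exact ⟨s + k, t, by linarith, h2, h3, by linarith, by module⟩
  have st1 : ∀ P, Cov a b c (TrapS P u v (a * b) (c ^ 2 + i * a)) (2 * i * a + (a ^ 2 + c ^ 2 + b ^ 2)) := by
    intro P
    rcases Nat.eq_zero_or_pos i with rfl | hi
    · simpa using Cov.unitTrap ha hb hc h hu hv huv P
    · exact ext1 _ _ _ _ P (by positivity) (by rw [h']; linarith [sq_nonneg (a : ℝ), sq_nonneg (b : ℝ)])
        (Cov.parA ha hb hc h hu hv huv hi ha P) (Cov.unitTrap ha hb hc h hu hv huv _)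
  have st2 : Cov a b c (TrapS P u v (a * b) (c ^ 2 + i * a + j * b))
      (2 * b * j + (2 * i * a + (a ^ 2 + c ^ 2 + b ^ 2))) := by
    rcases Nat.eq_zero_or_pos j with rfl | hj
    · simpa using st1 P
    · refine ext1 _ _ _ _ P (by positivity) ?_ ?_ (st1 _)
      · rw [h']
        have : (0 : ℝ) ≤ i * a := by positivity
        linarith [sq_nonneg (a : ℝ), sq_nonneg (b : ℝ)]
      · rw [ParS_swap, mul_comm (a : ℝ) b]
        exact Cov.parA ha hb hc h hv hu huv' hb hj P
  convert st2 using 2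
  · rw [h']; linarith
  · rw [h]; linarith

lemma Cov.trap {S : ℕ} (hS : ∀ T, S ≤ T → ∃ i j, T * (a * b) = a ^ 2 + b ^ 2 + i * a + j * b)
    (n : ℕ) (P : Plane) :
    Cov a b c (TrapS P u v ((n + 1) * (a * b)) ((S + n + 1) * (a * b)))
      (a * b * ((n + 1) ^ 2 + 2 * S * (n + 1))) := by
  induction n generalizing P with
  | zero =>
    obtain ⟨i, j, hij⟩ := hS S le_rfl
    convert Cov.trap1 ha hb hc h hu hv huv hij P using 2
    · simp
    · simp
    · ring
  | succ n ih =>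
    obtain ⟨i, j, hij⟩ := hS (S + n + 1) (by omega)
    have ab0 : (0 : ℝ) < a * b := by positivity
    have n0 : (0 : ℝ) ≤ (n + 1) * (a * b) := by positivity
    have S0 : (0 : ℝ) ≤ S * (a * b) := by positivity
    have h1 := Cov.trap1 ha hb hc h hu hv huv hij P
    have h2 := ih (P + (a * b : ℝ) • v)
    convert h1.union h2 using 1
    · ext x
      push_cast
      constructor
      · rintro ⟨s, t, h1, h2, h3, h4, rfl⟩
        by_cases hA : t ≤ a * b
        · left; exact ⟨s, t, h1, h2, hA, by linarith, rfl⟩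
        · right; exact ⟨s, t - a * b, h1, by linarith, by linarith, by linarith, by module⟩
      · rintro (⟨s, t, h1, h2, h3, h4, rfl⟩ | ⟨s, t, h1, h2, h3, h4, rfl⟩)
        · exact ⟨s, t, h1, h2, by linarith, by linarith, rfl⟩
        · exact ⟨s, t + a * b, h1, by linarith, by linarith, by linarith, by module⟩
    · ring

lemma Cov.equi {K m : ℕ} (hK : 0 < K) (hm : 3 * K ≤ m)
    (hS : ∀ T, K ≤ T → ∃ i j, T * (a * b) = a ^ 2 + b ^ 2 + i * a + j * b) (P : Plane) :
    Cov a b c (TriS P u v (m * (a * b))) (m ^ 2 * a * b) := by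
  obtain ⟨k, rfl⟩ := Nat.exists_eq_succ_of_ne_zero hK.ne'
  obtain ⟨r, rfl⟩ : ∃ r, m = 2 * (k + 1) + (r + 1) := ⟨m - 2 * (k + 1) - 1, by omega⟩
  have hS' : ∀ T, r + 1 ≤ T → ∃ i j, T * (a * b) = a ^ 2 + b ^ 2 + i * a + j * b :=
    fun T hT => hS T (by simp only [Nat.succ_eq_add_one]; omega)
  have n1 := norm_comb hu hv huv 1 (-1) 1 (by positivity) (by ring)
  -- s0 = k+1, t0 = k+1, w0 = r+1
  have r1 := Cov.trap ha hb hc h hu hv huv hS' k (P + ((k + 1) * (a * b) : ℝ) • u)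
  have r2 := Cov.trap ha hb hc h (u := -v) (v := u - v) (by rwa [norm_neg])
    (by rw [← n1]; congr 1; module)
    (by rw [inner_neg_left, inner_sub_right, real_inner_self_eq_norm_sq, hv, real_inner_comm, huv]
        norm_num) hS k
    (P + ((2 * (k + 1)) * (a * b) : ℝ) • v)
  have r3 := Cov.trap ha hb hc h (u := v - u) (v := -u)
    (by rw [← n1, ← norm_neg]; congr 1; module) (by rwa [norm_neg])
    (by rw [inner_neg_right, inner_sub_left, real_inner_self_eq_norm_sq, hu, real_inner_comm, huv]
        norm_num) hS r
    (P + ((k + 1) * (a * b) : ℝ) • v + ((k + r + 2) * (a * b) : ℝ) • u)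
  convert (r1.union r2).union r3 using 1
  · have k0 : (0 : ℝ) ≤ (k + 1) * (a * b) := by positivity
    have r0 : (0 : ℝ) ≤ (r + 1) * (a * b) := by positivity
    ext x
    push_cast
    constructor
    · rintro ⟨s, t, h1, h2, h3, rfl⟩
      by_cases hA : t ≤ (k + 1) * (a * b) ∧ (k + 1) * (a * b) ≤ s
      · left; left
        exact ⟨s - (k + 1) * (a * b), t, by linarith, h2, by linarith, by linarith, by module⟩
      by_cases hB : s ≤ (k + 1) * (a * b) ∧ s + t ≤ 2 * (k + 1) * (a * b)
      · left; right
        exact ⟨2 * (k + 1) * (a * b) - s - t, s, by linarith, h1, by linarith, by linarith,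
          by module⟩
      · right
        have hC : (k + 1) * (a * b) ≤ t ∧ 2 * (k + 1) * (a * b) ≤ s + t := by
          by_contra hC
          rw [not_and_or, not_le, not_le] at *
          rcases hA with hA | hA <;> rcases hB with hB | hB <;> rcases hC with hC | hC <;> linarith
        exact ⟨t - (k + 1) * (a * b), (2 * (k + 1) + (r + 1)) * (a * b) - s - t,
          by linarith, by linarith, by linarith, by linarith, by module⟩
    · rintro ((⟨s, t, h1, h2, h3, h4, rfl⟩ | ⟨s, t, h1, h2, h3, h4, rfl⟩) |
        ⟨s, t, h1, h2, h3, h4, rfl⟩)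
      · exact ⟨s + (k + 1) * (a * b), t, by linarith, by linarith, by linarith, by module⟩
      · push_cast at *
        exact ⟨t, 2 * (k + 1) * (a * b) - s - t, by linarith, by linarith, by linarith, by module⟩
      · push_cast at *
        exact ⟨(k + r + 2) * (a * b) - s - t, s + (k + 1) * (a * b), by linarith, by linarith,
          by linarith, by module⟩
  · simp only [Nat.succ_eq_add_one]; ring

end lat

lemma rep_exists {a b c : ℕ} (ha : 0 < a) (hb : 0 < b) (hab : Nat.Coprime a b)
    (h : c ^ 2 = a ^ 2 + b ^ 2 + a * b) {T : ℕ} (hT : c ^ 2 ≤ T * (a * b) + a + b) :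
    ∃ i j, T * (a * b) = a ^ 2 + b ^ 2 + i * a + j * b := by
  have a1 : 1 < a := by
    by_contra hh
    obtain rfl : a = 1 := by omega
    have : b < c := by nlinarith
    have : c < b + 1 := by nlinarith
    omega
  have b1 : 1 < b := by
    by_contra hh
    obtain rfl : b = 1 := by omega
    have : a < c := by nlinarith
    have : c < a + 1 := by nlinarith
    omega
  have hne : c ^ 2 ≠ T * (a * b) + a + b := by
    intro e
    rw [h] at e
    have e1 : a ∣ b - 1 := by
      have : (a : ℤ) ∣ b * (b - 1) := ⟨T * b + 1 - a - b, by
        have : (a : ℤ) ^ 2 + b ^ 2 + a * b = T * (a * b) + a + b := by exact_mod_cast e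
        linear_combination this⟩
      have := (Nat.isCoprime_iff_coprime.mpr hab).dvd_of_dvd_mul_left this
      zify [b1.le]; exact this
    have e2 : b ∣ a - 1 := by
      have : (b : ℤ) ∣ a * (a - 1) := ⟨T * a + 1 - a - b, by
        have : (a : ℤ) ^ 2 + b ^ 2 + a * b = T * (a * b) + a + b := by exact_mod_cast e
        linear_combination this⟩
      have := (Nat.isCoprime_iff_coprime.mpr hab.symm).dvd_of_dvd_mul_left this
      zify [a1.le]; exact this
    have := Nat.le_of_dvd (by omega) e1
    have := Nat.le_of_dvd (by omega) e2
    omega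
  have hpred : (a - 1) * (b - 1) + a + b = a * b + 1 := by
    obtain ⟨x, rfl⟩ : ∃ x, a = x + 1 := ⟨a - 1, by omega⟩
    obtain ⟨y, rfl⟩ : ∃ y, b = y + 1 := ⟨b - 1, by omega⟩
    simp only [Nat.add_sub_cancel]; ring
  obtain ⟨i, j, hij⟩ := Nat.exists_add_mul_eq_of_gcd_dvd_of_mul_pred_le a b
    (T * (a * b) - a ^ 2 - b ^ 2) (by rw [hab.gcd_eq_one]; exact one_dvd _)
    (by simp only [Nat.pred_eq_sub_one]; omega)
  exact ⟨i, j, by omega⟩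
lemma convexHull_eq_TriS (P u v : Plane) : convexHull ℝ {P, P + u, P + v} = TriS P u v 1 := by
  apply Set.Subset.antisymm
  · apply convexHull_min
    · rintro x (rfl | rfl | rfl)
      · exact ⟨0, 0, by norm_num, by norm_num, by norm_num, by module⟩
      · exact ⟨1, 0, by norm_num, by norm_num, by norm_num, by module⟩
      · exact ⟨0, 1, by norm_num, by norm_num, by norm_num, by module⟩
    · rintro x ⟨s, t, h1, h2, h3, rfl⟩ y ⟨s', t', h1', h2', h3', rfl⟩ p q hp hq hpq
      refine ⟨p * s + q * s', p * t + q * t', by positivity, by positivity, ?_, ?_⟩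
      · nlinarith
      · obtain rfl : q = 1 - p := by linarith
        module
  · rintro x ⟨s, t, h1, h2, h3, rfl⟩
    have hP : P ∈ convexHull ℝ {P, P + u, P + v} := subset_convexHull _ _ (by simp)
    have hu : P + u ∈ convexHull ℝ {P, P + u, P + v} := subset_convexHull _ _ (by simp)
    have hv : P + v ∈ convexHull ℝ {P, P + u, P + v} := subset_convexHull _ _ (by simp)
    have := (convex_convexHull ℝ {P, P + u, P + v}).sum_mem (t := Finset.univ)
      (w := ![1 - s - t, s, t]) (z := ![P, P + u, P + v])
      (by intro i _; fin_cases i <;> simp <;> linarith)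
      (by simp [Fin.sum_univ_three]; ring)
      (by intro i _; fin_cases i <;> simp only [] <;> assumption)
    convert this using 1
    simp only [Fin.sum_univ_three, Matrix.cons_val]
    module

lemma TriS_image (L : Plane →ₗ[ℝ] Plane) (P u v : Plane) (k : ℝ) :
    L '' TriS P u v k = TriS (L P) (L u) (L v) k := by
  ext x
  constructor
  · rintro ⟨_, ⟨s, t, h1, h2, h3, rfl⟩, rfl⟩
    exact ⟨s, t, h1, h2, h3, by simp⟩
  · rintro ⟨s, t, h1, h2, h3, rfl⟩
    exact ⟨_, ⟨s, t, h1, h2, h3, rfl⟩, by simp⟩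

lemma pt_comb (x y z w s t : ℝ) : s • pt x y + t • pt z w = pt (s * x + t * z) (s * y + t * w) := by
  ext i; fin_cases i <;> simp [pt]

lemma inner_pt (x y z w : ℝ) : inner ℝ (pt x y) (pt z w) = x * z + y * w := by
  simp [pt, PiLp.inner_apply, Fin.sum_univ_two]; ring

lemma norm_pt (x y z : ℝ) (hz : 0 ≤ z) (h : z ^ 2 = x ^ 2 + y ^ 2) : ‖pt x y‖ = z := by
  rw [← sq_eq_sq₀ (norm_nonneg _) hz, h, ← real_inner_self_eq_norm_sq, inner_pt]; ring

lemma eq_pt (x : Plane) : x = x 0 • pt 1 0 + x 1 • pt 0 1 := by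
  rw [pt_comb]; ext i; fin_cases i <;> simp [pt]

/-- side-side-side -/
lemma exists_isom {u v u' v' : Plane} (h1 : ‖u‖ = ‖u'‖) (h2 : ‖v‖ = ‖v'‖)
    (h3 : ‖u - v‖ = ‖u' - v'‖) (hsp : ∀ x : Plane, ∃ s t : ℝ, x = s • u + t • v)
    (hli : LinearIndependent ℝ ![u, v]) :
    ∃ L : Plane ≃ₗᵢ[ℝ] Plane, L u = u' ∧ L v = v' := by
  have hin : inner ℝ u v = inner ℝ u' v' := by
    have e1 := norm_sub_sq_real u v
    have e2 := norm_sub_sq_real u' v'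
    rw [h1, h2, h3] at e1
    linarith
  let B := basisOfLinearIndependentOfCardEqFinrank hli (by simp)
  let f : Plane →ₗ[ℝ] Plane := B.constr ℝ ![u', v']
  have fu : f u = u' := by
    have := B.constr_basis ℝ ![u', v'] 0
    simpa [B, f] using this
  have fv : f v = v' := by
    have := B.constr_basis ℝ ![u', v'] 1
    simpa [B, f] using this
  have hf : ∀ x, ‖f x‖ = ‖x‖ := by
    intro x
    obtain ⟨s, t, rfl⟩ := hsp x
    rw [← sq_eq_sq₀ (norm_nonneg _) (norm_nonneg _), map_add, map_smul, map_smul, fu, fv,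
      norm_add_sq_real, norm_add_sq_real]
    simp only [norm_smul, inner_smul_left, inner_smul_right, h1, h2, hin]
  exact ⟨LinearIsometry.toLinearIsometryEquiv ⟨f, hf⟩ rfl, fu, fv⟩

open MeasureTheory in
lemma disj_of_measure {N : ℕ} (A : Fin N → Set Plane) (V : ENNReal) (hV : V ≠ ⊤)
    (hA : ∀ i, volume (A i) = V) (hU : N * V ≤ volume (⋃ i, A i)) (i j : Fin N) (hij : i ≠ j) :
    interior (A i) ∩ interior (A j) = ∅ := by
  by_contra hne
  have hne : (interior (A i) ∩ interior (A j)).Nonempty := Set.nonempty_iff_ne_empty.mpr hne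
  have hop : IsOpen (interior (A i) ∩ interior (A j)) := isOpen_interior.inter isOpen_interior
  have hpos := hop.measure_pos volume hne
  set O := interior (A i) ∩ interior (A j) with hO
  have hOj : O ⊆ A j := fun x hx => interior_subset hx.2
  have hOi : O ⊆ A i := fun x hx => interior_subset hx.1
  have hOfin : volume O ≠ ⊤ := ne_top_of_le_ne_top (by rwa [hA j]) (measure_mono hOj)
  have hsub : (⋃ i, A i) ⊆ ⋃ k, (if k = j then A j \ O else A k) := by
    intro x hx
    obtain ⟨k, hk⟩ := Set.mem_iUnion.mp hx
    by_cases hkj : k = j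
    · subst hkj
      by_cases hxO : x ∈ O
      · exact Set.mem_iUnion.mpr ⟨i, by rw [if_neg hij]; exact hOi hxO⟩
      · exact Set.mem_iUnion.mpr ⟨k, by rw [if_pos rfl]; exact ⟨hk, hxO⟩⟩
    · exact Set.mem_iUnion.mpr ⟨k, by rw [if_neg hkj]; exact hk⟩
  have h1 : volume (⋃ i, A i) ≤ ∑ k, volume (if k = j then A j \ O else A k) :=
    (measure_mono hsub).trans (measure_iUnion_fintype_le _ _)
  have h2 : volume (A j \ O) < V := by
    rw [measure_sdiff hOj hop.measurableSet.nullMeasurableSet hOfin, hA]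
    refine ENNReal.sub_lt_self hV ?_ hpos.ne'
    exact (hpos.trans_le ((measure_mono hOj).trans (hA j).le)).ne'
  have h3 : ∑ k, volume (if k = j then A j \ O else A k) < ∑ k : Fin N, V := by
    have e : ∀ s : Finset (Fin N), j ∉ s →
        ∑ k ∈ s, volume (if k = j then A j \ O else A k) = ∑ k ∈ s, V := by
      intro s hs
      refine Finset.sum_congr rfl fun k hk => ?_
      rw [if_neg (by rintro rfl; exact hs hk), hA]
    rw [← Finset.add_sum_erase _ _ (Finset.mem_univ j),
      ← Finset.add_sum_erase _ (fun _ => V) (Finset.mem_univ j), e _ (by simp), if_pos rfl]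
    refine ENNReal.add_lt_add_right ?_ h2
    simp [ENNReal.mul_eq_top, hV]
  have h4 : ∑ k : Fin N, V = N * V := by simp
  exact absurd (hU.trans h1) (not_le.mpr (h4 ▸ h3))

/-- linear map sending the standard basis to given vectors -/
def linOf (x y z w : ℝ) : Plane →ₗ[ℝ] Plane := Matrix.toLpLin 2 2 !![x, z; y, w]

lemma linOf_pt (x y z w p q : ℝ) : linOf x y z w (pt p q) = pt (x * p + z * q) (y * p + w * q) := by
  ext i; fin_cases i <;> simp [linOf, pt, Matrix.toLpLin_apply] <;> ring

open MeasureTheory in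
lemma vol_TriS (x y z w : ℝ) : volume (TriS 0 (pt x y) (pt z w) 1) =
    ENNReal.ofReal |x * w - z * y| * volume (TriS 0 (pt 1 0) (pt 0 1) 1) := by
  have := Measure.addHaar_image_linearMap volume (linOf x y z w) (TriS 0 (pt 1 0) (pt 0 1) 1)
  rw [TriS_image, linOf_pt, linOf_pt, map_zero] at this
  simp only [mul_one, mul_zero, add_zero, zero_add] at this
  rw [this, linOf, LinearMap.det_toLpLin, Matrix.det_fin_two_of]

lemma vol_std_ne_top : MeasureTheory.volume (TriS 0 (pt 1 0) (pt 0 1) 1) ≠ ⊤ := by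
  have e := convexHull_eq_TriS 0 (pt 1 0) (pt 0 1)
  rw [← e]
  have : Bornology.IsBounded (convexHull ℝ {0, 0 + pt 1 0, 0 + pt 0 1}) := by
    rw [isBounded_convexHull]
    exact (Set.toFinite _).isBounded
  exact this.measure_lt_top.ne
lemma vol_isom (L : Plane ≃ₗᵢ[ℝ] Plane) (P : Plane) (S : Set Plane) :
    MeasureTheory.volume ((L.toIsometryEquiv.trans (IsometryEquiv.addLeft P)) '' S)
      = MeasureTheory.volume S := by
  have e : (L.toIsometryEquiv.trans (IsometryEquiv.addLeft P)) '' S = (P + ·) '' (L '' S) := by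
    rw [Set.image_image]; rfl
  rw [e, Set.image_add_left, MeasureTheory.measure_preimage_add]
  have := L.measurePreserving.measure_preimage_equiv (f := L.toMeasurableEquiv) (L '' S)
  rw [← this]
  congr 1
  exact Set.preimage_image_eq S L.injective

theorem stmt3 (a b c : ℕ) (ha : 0 < a) (hb : 0 < b) (hc : 0 < c)
    (hab : Nat.Coprime a b) (hac : Nat.Coprime a c) (hbc : Nat.Coprime b c)
    (h : c ^ 2 = a ^ 2 + b ^ 2 + a * b)
    (m : ℕ) (hm : 3 * ⌈(((c : ℚ) ^ 2 - a - b) / (a * b))⌉ ≤ (m : ℤ)) :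
    TilesInto (EquilateralTri ((m : ℝ) * a * b)) (m ^ 2 * a * b) a b c := by
  have h' : (c : ℝ) ^ 2 = a ^ 2 + b ^ 2 + a * b := by exact_mod_cast h
  have a0 : (0 : ℝ) < a := by positivity
  have b0 : (0 : ℝ) < b := by positivity
  have q3 : √3 ^ 2 = (3 : ℝ) := Real.sq_sqrt (by norm_num)
  have s3 : (0 : ℝ) < √3 := by positivity
  obtain ⟨K, hK0, hKm, hK⟩ : ∃ K : ℕ, 0 < K ∧ 3 * K ≤ m ∧ c ^ 2 ≤ K * (a * b) + a + b := by
    have hQ : (c : ℚ) ^ 2 = a ^ 2 + b ^ 2 + a * b := by exact_mod_cast h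
    have a1 : (1 : ℚ) ≤ a := by exact_mod_cast ha
    have b1 : (1 : ℚ) ≤ b := by exact_mod_cast hb
    have hpos : 0 < ⌈(((c : ℚ) ^ 2 - a - b) / (a * b))⌉ := by
      rw [Int.ceil_pos]
      apply div_pos _ (by positivity)
      rw [hQ]; nlinarith
    obtain ⟨K, hK⟩ := Int.eq_ofNat_of_zero_le hpos.le
    have hle := Int.le_ceil (((c : ℚ) ^ 2 - a - b) / (a * b))
    rw [hK] at hpos hm hle
    refine ⟨K, by exact_mod_cast hpos, by exact_mod_cast hm, ?_⟩
    rw [div_le_iff₀ (by positivity)] at hle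
    have : (c : ℚ) ^ 2 ≤ K * (a * b) + a + b := by push_cast at hle; linarith
    exact_mod_cast this
  have hrep : ∀ T, K ≤ T → ∃ i j, T * (a * b) = a ^ 2 + b ^ 2 + i * a + j * b := fun T hT =>
    rep_exists ha hb hab h (hK.trans (by gcongr))
  have hcov := Cov.equi ha hb hc h (u := pt 1 0) (v := pt (1 / 2) (√3 / 2))
    (norm_pt _ _ _ (by norm_num) (by norm_num))
    (norm_pt _ _ _ (by norm_num) (by rw [div_pow √3, q3]; norm_num))
    (by rw [inner_pt]; norm_num) hK0 hKm hrep 0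
  have m0 : 0 < m := by omega
  have m0' : (0 : ℝ) < m := by positivity
  set X : ℝ := m * a * b with hX
  have X0 : 0 < X := by positivity
  have hEq : EquilateralTri X = TriS 0 (pt X 0) (pt (X / 2) (X * √3 / 2)) 1 := by
    rw [← convexHull_eq_TriS, EquilateralTri]
    have : pt 0 0 = 0 := by ext i; fin_cases i <;> simp [pt]
    rw [this, zero_add, zero_add]
  have hEq2 : TriS 0 (pt 1 0) (pt (1 / 2) (√3 / 2)) (m * (a * b)) = EquilateralTri X := by
    rw [hEq]
    ext x
    have e1 : pt X 0 = X • pt 1 0 := by ext i; fin_cases i <;> simp [pt]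
    have e2 : pt (X / 2) (X * √3 / 2) = X • pt (1 / 2) (√3 / 2) := by
      ext i; fin_cases i <;> simp [pt] <;> ring
    rw [e1, e2, ← mul_assoc, ← hX]
    constructor
    · rintro ⟨s, t, h1, h2, h3, rfl⟩
      refine ⟨s / X, t / X, by positivity, by positivity, ?_, ?_⟩
      · rw [← add_div, div_le_iff₀ X0]; linarith
      · rw [smul_smul, smul_smul, div_mul_cancel₀ _ X0.ne', div_mul_cancel₀ _ X0.ne']
    · rintro ⟨s, t, h1, h2, h3, rfl⟩
      refine ⟨s * X, t * X, by positivity, by positivity, by nlinarith, ?_⟩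
      rw [smul_smul, smul_smul]
  rw [hEq2] at hcov
  obtain ⟨P, u, v, huv, hS⟩ := hcov
  set u0 := pt a 0 with hu0
  set v0 := pt (-b / 2) (b * √3 / 2) with hv0
  have nu : ‖u0‖ = a := norm_pt _ _ _ (by positivity) (by ring)
  have nv : ‖v0‖ = b := norm_pt _ _ _ (by positivity) (by ring_nf; rw [q3]; ring)
  have nuv : ‖u0 - v0‖ = c := by
    have e : u0 - v0 = pt (a + b / 2) (-(b * √3 / 2)) := by
      ext i; fin_cases i <;> simp [pt, hu0, hv0]; ring
    rw [e]
    refine norm_pt _ _ _ (by positivity) ?_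
    rw [h']; ring_nf; rw [q3]; ring
  have hsp : ∀ x : Plane, ∃ s t : ℝ, x = s • u0 + t • v0 := by
    intro x
    refine ⟨(x 0 + x 1 / √3) / a, 2 * x 1 / (b * √3), ?_⟩
    rw [hu0, hv0, pt_comb]
    ext i
    fin_cases i
    · simp [pt]; field_simp; ring
    · simp [pt]; field_simp
  have hli : LinearIndependent ℝ ![u0, v0] := by
    rw [LinearIndependent.pair_iff]
    intro s t hst
    rw [hu0, hv0, pt_comb] at hst
    have e0 := congrArg (fun x : Plane => x 0) hst
    have e1 := congrArg (fun x : Plane => x 1) hst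
    simp [pt] at e0 e1
    have t0 : t = 0 := by
      rcases e1 with e1 | e1
      · exact e1
      · omega
    subst t0
    simp at e0
    exact ⟨e0.resolve_right (by omega), rfl⟩
  have hL : ∀ i, ∃ L : Plane ≃ₗᵢ[ℝ] Plane, L u0 = u i ∧ L v0 = v i := fun i =>
    exists_isom (by rw [nu, (huv i).1]) (by rw [nv, (huv i).2.1]) (by rw [nuv, (huv i).2.2]) hsp hli
  choose L hLu hLv using hL
  let f : Fin (m ^ 2 * a * b) → Plane ≃ᵢ Plane := fun i =>
    (L i).toIsometryEquiv.trans (IsometryEquiv.addLeft (P i))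
  have hf : ∀ i, f i '' TriS 0 u0 v0 1 = TriS (P i) (u i) (v i) 1 := by
    intro i
    have hfx : ∀ x, f i x = P i + L i x := fun x => rfl
    ext x
    constructor
    · rintro ⟨_, ⟨s, t, h1, h2, h3, rfl⟩, rfl⟩
      refine ⟨s, t, h1, h2, h3, ?_⟩
      rw [hfx, map_add, map_add, map_smul, map_smul, map_zero, hLu, hLv]; module
    · rintro ⟨s, t, h1, h2, h3, rfl⟩
      refine ⟨_, ⟨s, t, h1, h2, h3, rfl⟩, ?_⟩
      rw [hfx, map_add, map_add, map_smul, map_smul, map_zero, hLu, hLv]; module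
  have hU : EquilateralTri X = ⋃ i, f i '' TriS 0 u0 v0 1 := by
    rw [hS]; exact Set.iUnion_congr fun i => (hf i).symm
  refine ⟨f, TriS 0 u0 v0 1, ⟨0 + v0, 0 + u0, 0, ?_, ?_, ?_, ?_⟩, hU, ?_⟩
  · rw [zero_add, dist_zero_right, nu]
  · rw [zero_add, dist_zero_right, nv]
  · rw [zero_add, zero_add, dist_comm, dist_eq_norm, nuv]
  · rw [← convexHull_eq_TriS]
    congr 1
    ext x
    simp only [Set.mem_insert_iff, Set.mem_singleton_iff]
    tauto
  · refine disj_of_measure _ (MeasureTheory.volume (TriS 0 u0 v0 1)) ?_ ?_ ?_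
    · rw [hu0, hv0, vol_TriS]
      exact ENNReal.mul_ne_top ENNReal.ofReal_ne_top vol_std_ne_top
    · intro i
      exact vol_isom (L i) (P i) _
    · rw [← hU, hEq, hu0, hv0, vol_TriS a 0, vol_TriS X 0, ← mul_assoc]
      gcongr ?_ * _
      rw [← ENNReal.ofReal_natCast, ← ENNReal.ofReal_mul (by positivity)]
      apply le_of_eq
      congr 1
      have e1 : X * (X * √3 / 2) - X / 2 * 0 = X * (X * √3 / 2) := by ring
      have e2 : (a : ℝ) * (b * √3 / 2) - -b / 2 * 0 = a * (b * √3 / 2) := by ring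
      rw [e1, e2, abs_of_pos (by positivity), abs_of_pos (by positivity), hX]
      push_cast
      ring
end
end

section
/- Let a, b, c be pairwise coprime positive integers with c² = a² + b² + ab, and suppose that a and b are both squarefree. If X is a positive real number such that the equilateral triangle with side length X tiles into N congruent copies of the triangle with side lengths (a, b, c) for some positive integer N, then X = m·a·b for some positive integer m. -/
noncomputable section

open MeasureTheory Set Filter Topology

lemma mem_tri {P Q R z : Plane} : z ∈ convexHull ℝ {P, Q, R} ↔
    ∃ s t : ℝ, 0 ≤ s ∧ 0 ≤ t ∧ s + t ≤ 1 ∧ z = P + (s • (Q - P) + t • (R - P)) := by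
  rw [convexHull_insert (by simp), convexHull_pair]
  simp only [mem_convexJoin, mem_singleton_iff, exists_eq_left]
  constructor
  · rintro ⟨w, ⟨α, β, hα, hβ, hαβ, rfl⟩, ⟨γ, δ, hγ, hδ, hγδ, rfl⟩⟩
    refine ⟨δ * α, δ * β, by positivity, by positivity, by nlinarith, ?_⟩
    have h1 : γ = 1 - δ := by linarith
    have h2 : α = 1 - β := by linarith
    subst h1 h2
    module
  · rintro ⟨s, t, hs, ht, hst, rfl⟩
    by_cases h0 : s + t = 0
    · have h1 : s = 0 := by linarith
      have h2 : t = 0 := by linarith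
      subst h1 h2
      exact ⟨Q, left_mem_segment _ _ _, by simpa using left_mem_segment ℝ P Q⟩
    · have hp : 0 < s + t := lt_of_le_of_ne (by linarith) (Ne.symm h0)
      refine ⟨(s / (s + t)) • Q + (t / (s + t)) • R,
        ⟨_, _, by positivity, by positivity, by field_simp, rfl⟩,
        ⟨1 - (s + t), s + t, by linarith, hp.le, by ring, ?_⟩⟩
      rw [smul_add, smul_smul, smul_smul, mul_div_cancel₀ _ h0, mul_div_cancel₀ _ h0]
      module

def T0 : Set Plane := {v | 0 ≤ v 0 ∧ 0 ≤ v 1 ∧ v 0 + v 1 ≤ 1}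

def dt (P Q R : Plane) : ℝ := (Q 0 - P 0) * (R 1 - P 1) - (R 0 - P 0) * (Q 1 - P 1)

lemma vol_tri (P Q R : Plane) :
    volume (convexHull ℝ {P, Q, R}) = ENNReal.ofReal |dt P Q R| * volume T0 := by
  let M : Matrix (Fin 2) (Fin 2) ℝ := !![Q 0 - P 0, R 0 - P 0; Q 1 - P 1, R 1 - P 1]
  let B := (EuclideanSpace.basisFun (Fin 2) ℝ).toBasis
  let L : Plane →ₗ[ℝ] Plane := Matrix.toLin B B M
  have hL : ∀ v : Plane, L v = v 0 • (Q - P) + v 1 • (R - P) := by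
    intro v
    ext i
    have : L v = Matrix.toEuclideanLin M v := by
      rw [Matrix.toEuclideanLin_eq_toLin_orthonormal]
    rw [this]
    fin_cases i <;> simp [M, Matrix.mulVec, dotProduct, Fin.sum_univ_two] <;> ring
  have hdet : LinearMap.det L = dt P Q R := by
    simp only [L, LinearMap.det_toLin, M, Matrix.det_fin_two_of, dt]
  have himg : convexHull ℝ {P, Q, R} = (fun x => P + x) '' (L '' T0) := by
    ext z
    rw [mem_tri]
    constructor
    · rintro ⟨s, t, hs, ht, hst, rfl⟩
      refine ⟨_, ⟨pt s t, ⟨by simpa [pt] using hs, by simpa [pt] using ht,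
        by simpa [pt] using hst⟩, rfl⟩, ?_⟩
      simp [hL, pt]
    · rintro ⟨_, ⟨v, ⟨h1, h2, h3⟩, rfl⟩, rfl⟩
      exact ⟨v 0, v 1, h1, h2, h3, by simp [hL]⟩
  rw [himg, image_add_left, measure_preimage_add, Measure.addHaar_image_linearMap, hdet]

lemma T0_ne_zero : volume T0 ≠ 0 := by
  have ho : IsOpen {v : Plane | 0 < v 0 ∧ 0 < v 1 ∧ v 0 + v 1 < 1} := by
    have c0 : Continuous fun v : Plane => v 0 := by fun_prop
    have c1 : Continuous fun v : Plane => v 1 := by fun_prop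
    exact (isOpen_lt continuous_const c0).inter
      ((isOpen_lt continuous_const c1).inter (isOpen_lt (c0.add c1) continuous_const))
  have hne : {v : Plane | 0 < v 0 ∧ 0 < v 1 ∧ v 0 + v 1 < 1}.Nonempty :=
    ⟨pt (1/3) (1/3), by simp [pt]; norm_num⟩
  have := ho.measure_pos volume hne
  refine (this.trans_le (measure_mono ?_)).ne'
  rintro v ⟨h1, h2, h3⟩
  exact ⟨h1.le, h2.le, h3.le⟩

lemma compact_tri (P Q R : Plane) : IsCompact (convexHull ℝ {P, Q, R}) :=
  Set.Finite.isCompact_convexHull (𝕜 := ℝ) (Set.toFinite _)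

lemma T0_ne_top : volume T0 ≠ ⊤ := by
  have h := vol_tri (pt 0 0) (pt 1 0) (pt 0 1)
  have : dt (pt 0 0) (pt 1 0) (pt 0 1) = 1 := by simp [dt, pt]
  rw [this] at h
  simp only [abs_one, ENNReal.ofReal_one, one_mul] at h
  rw [← h]
  exact (compact_tri _ _ _).measure_lt_top.ne

lemma aedisj {E : Type*} [NormedAddCommGroup E] [NormedSpace ℝ E] [MeasurableSpace E]
    [BorelSpace E] [FiniteDimensional ℝ E] (μ : Measure E) [μ.IsAddHaarMeasure]
    {s t : Set E} (hs : Convex ℝ s) (ht : Convex ℝ t)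
    (h : interior s ∩ interior t = ∅) : AEDisjoint μ s t := by
  have h1 := hs.addHaar_frontier μ
  have h2 := ht.addHaar_frontier μ
  refine measure_mono_null ?_ (measure_union_null h1 h2)
  rintro x ⟨hx, hy⟩
  by_cases hi : x ∈ interior s
  · right
    refine ⟨subset_closure hy, fun hj => ?_⟩
    have : x ∈ interior s ∩ interior t := ⟨hi, hj⟩
    rw [h] at this
    exact this
  · left
    exact ⟨subset_closure hx, hi⟩

lemma dist_sq (P Q : Plane) : dist P Q ^ 2 = (P 0 - Q 0) ^ 2 + (P 1 - Q 1) ^ 2 := by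
  rw [EuclideanSpace.dist_eq, Real.sq_sqrt (by positivity)]
  simp [Fin.sum_univ_two, Real.dist_eq, sq_abs]

lemma dt_sq (P Q R : Plane) (a b c : ℝ) (h1 : dist Q R = a) (h2 : dist P R = b)
    (h3 : dist P Q = c) (h : c ^ 2 = a ^ 2 + b ^ 2 + a * b) :
    dt P Q R ^ 2 = 3 / 4 * (a * b) ^ 2 := by
  have e1 := dist_sq Q R
  have e2 := dist_sq P R
  have e3 := dist_sq P Q
  rw [h1] at e1
  rw [h2] at e2
  rw [h3] at e3
  have key : 4 * dt P Q R ^ 2 = 4 * c ^ 2 * b ^ 2 - (c ^ 2 + b ^ 2 - a ^ 2) ^ 2 := by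
    rw [e1, e2, e3, dt]; ring
  rw [h] at key
  linear_combination key / 4

def slice (T : Set Plane) : Set ℝ := {x | pt x 0 ∈ T}

lemma pt_combo (s t x y x' y' : ℝ) :
    s • pt x y + t • pt x' y' = pt (s * x + t * x') (s * y + t * y') := by
  ext i
  fin_cases i <;> simp [pt]

lemma slice_convex {T : Set Plane} (hT : Convex ℝ T) : Convex ℝ (slice T) := by
  intro x hx y hy s t hs ht hst
  have := hT hx hy hs ht hst
  rw [pt_combo] at this
  simpa [slice] using this

lemma pt_eta (z : Plane) : pt (z 0) (z 1) = z := by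
  ext i
  fin_cases i <;> simp [pt]

lemma cont_pt : Continuous (fun p : ℝ × ℝ => pt p.1 p.2) := by
  unfold pt
  refine (PiLp.continuous_toLp 2 _).comp ?_
  refine continuous_pi fun i => ?_
  fin_cases i
  · simpa using continuous_fst
  · simpa using continuous_snd

lemma slice_closed {T : Set Plane} (hT : IsClosed T) : IsClosed (slice T) :=
  hT.preimage (cont_pt.comp (by fun_prop : Continuous fun x : ℝ => (x, (0:ℝ))))

lemma interior_pos {T : Set Plane} (hT : ∀ z ∈ T, 0 ≤ z 1) {z : Plane} (hz : z ∈ interior T) :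
    0 < z 1 := by
  have hc : Continuous (fun y : ℝ => pt (z 0) y) :=
    cont_pt.comp (by fun_prop : Continuous fun y : ℝ => (z 0, y))
  have h1 : ∀ᶠ y in 𝓝 (z 1), pt (z 0) y ∈ interior T :=
    hc.continuousAt.eventually_mem (by
      rw [pt_eta]; exact isOpen_interior.mem_nhds hz)
  have h2 : ∀ᶠ y in 𝓝[<] (z 1), pt (z 0) y ∈ interior T := h1.filter_mono nhdsWithin_le_nhds
  obtain ⟨y, hy, hlt⟩ := (h2.and self_mem_nhdsWithin).exists
  have := hT _ (interior_subset hy)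
  simp only [pt] at this
  simp at this hlt
  linarith

lemma slice_interior {T : Set Plane} (hc : Convex ℝ T) (hT : ∀ z ∈ T, 0 ≤ z 1)
    (hne : (interior T).Nonempty) {x : ℝ} (hx : x ∈ interior (slice T)) :
    ∀ᶠ y in 𝓝[>] (0:ℝ), pt x y ∈ interior T := by
  obtain ⟨z, hz⟩ := hne
  have hpos := interior_pos hT hz
  let g : ℝ → ℝ := fun y => (x - y / z 1 * z 0) / (1 - y / z 1)
  have hg : ContinuousAt g 0 := by
    refine ContinuousAt.div (by fun_prop) (by fun_prop) (by simp)
  have hg0 : g 0 = x := by simp [g]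
  have h1 : ∀ᶠ y in 𝓝[>] (0:ℝ), g y ∈ slice T :=
    (hg.eventually_mem (by rw [hg0]; exact mem_interior_iff_mem_nhds.1 hx)).filter_mono
      nhdsWithin_le_nhds
  have h2 : ∀ᶠ y in 𝓝[>] (0:ℝ), y < z 1 :=
    (eventually_lt_nhds hpos).filter_mono nhdsWithin_le_nhds
  filter_upwards [h1, h2, self_mem_nhdsWithin] with y hy hlt h0
  have h0 : 0 < y := h0
  have hs : y / z 1 < 1 := by rw [div_lt_one hpos]; exact hlt
  have := hc.combo_interior_self_mem_interior hz hy (a := y / z 1) (b := 1 - y / z 1)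
    (by positivity) (by linarith) (by ring)
  rw [← pt_eta z, pt_combo] at this
  have e : (1 - y / z 1) ≠ 0 := by linarith
  convert this using 2
  · simp only [g, pt_eta]
    rw [mul_div_cancel₀ _ e]; ring
  · simp only [pt_eta]; field_simp; simp

lemma tri_y {P Q R z : Plane} (hz : z ∈ convexHull ℝ {P, Q, R}) :
    ∃ s t : ℝ, 0 ≤ s ∧ 0 ≤ t ∧ s + t ≤ 1 ∧ z 0 = P 0 + (s * (Q 0 - P 0) + t * (R 0 - P 0)) ∧
      z 1 = P 1 + (s * (Q 1 - P 1) + t * (R 1 - P 1)) := by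
  obtain ⟨s, t, hs, ht, hst, rfl⟩ := mem_tri.1 hz
  exact ⟨s, t, hs, ht, hst, by simp, by simp⟩

lemma slice_one {P Q R : Plane} (hP : 0 ≤ P 1) (hQ : 0 < Q 1) (hR : 0 < R 1) :
    volume (slice (convexHull ℝ {P, Q, R})) = 0 := by
  refine measure_mono_null (t := {P 0}) ?_ (by simp)
  intro x hx
  obtain ⟨s, t, hs, ht, hst, h0, h1⟩ := tri_y hx
  simp only [pt] at h0 h1
  simp at h0 h1
  have a1 : 0 ≤ s * Q 1 := by positivity
  have a2 : 0 ≤ t * R 1 := by positivity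
  have a3 : 0 ≤ (1 - s - t) * P 1 := mul_nonneg (by linarith) hP
  have b1 : s * Q 1 = 0 := by linarith
  have b2 : t * R 1 = 0 := by linarith
  have c1 : s = 0 := by simpa [hQ.ne'] using b1
  have c2 : t = 0 := by simpa [hR.ne'] using b2
  subst c1 c2
  simpa using h0

lemma slice_two {P Q R : Plane} (hP : P 1 = 0) (hQ : Q 1 = 0) (hR : 0 < R 1) :
    volume (slice (convexHull ℝ {P, Q, R})) = ENNReal.ofReal (dist P Q) := by
  have hd : dist P Q = |Q 0 - P 0| := by
    rw [← Real.sqrt_sq (dist_nonneg (x := P) (y := Q)), dist_sq, hP, hQ, ← Real.sqrt_sq_eq_abs]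
    congr 1; ring
  have : slice (convexHull ℝ {P, Q, R}) = segment ℝ (P 0) (Q 0) := by
    ext x
    constructor
    · intro hx
      obtain ⟨s, t, hs, ht, hst, h0, h1⟩ := tri_y hx
      simp only [pt] at h0 h1
      simp [hP, hQ] at h0 h1
      have c2 : t = 0 := by
        rcases h1 with h1 | h1
        · exact h1
        · linarith
      subst c2
      exact ⟨1 - s, s, by linarith, hs, by ring, by rw [h0]; simp; ring⟩
    · rintro ⟨s, t, hs, ht, hst, rfl⟩
      refine mem_tri.2 ⟨t, 0, ht, le_rfl, by linarith, ?_⟩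
      have : s = 1 - t := by linarith
      subst this
      ext i
      fin_cases i <;> simp [pt, hP, hQ]
      ring
  rw [this, segment_eq_uIcc, Real.volume_interval, hd]

lemma slice_tri {P Q R : Plane} (hP : 0 ≤ P 1) (hQ : 0 ≤ Q 1) (hR : 0 ≤ R 1)
    (hd : dt P Q R ≠ 0) (a b c : ℕ) (h1 : dist Q R = a) (h2 : dist P R = b)
    (h3 : dist P Q = c) : ∃ n : ℕ, volume (slice (convexHull ℝ {P, Q, R})) = n := by
  have e1 : ({P, Q, R} : Set Plane) = {Q, R, P} := by
    ext; simp; tauto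
  have e2 : ({P, Q, R} : Set Plane) = {P, R, Q} := by
    ext; simp; tauto
  have e3 : ({P, Q, R} : Set Plane) = {R, P, Q} := by
    ext; simp; tauto
  have e4 : ({P, Q, R} : Set Plane) = {Q, P, R} := by
    ext; simp; tauto
  rcases hP.eq_or_lt' with p | p <;> rcases hQ.eq_or_lt' with q | q <;>
    rcases hR.eq_or_lt' with r | r
  · exact absurd (by simp [dt, p, q, r]) hd
  · exact ⟨c, by rw [slice_two p q r, h3]; simp⟩
  · exact ⟨b, by rw [e2, slice_two p r q, h2]; simp⟩
  · exact ⟨0, by rw [slice_one p.ge q r]; simp⟩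
  · exact ⟨a, by rw [e1, slice_two q r p, h1]; simp⟩
  · exact ⟨0, by rw [e4, slice_one q.ge p r]; simp⟩
  · exact ⟨0, by rw [e3, slice_one r.ge p q]; simp⟩
  · exact ⟨0, by rw [slice_one hP q r]; simp⟩

theorem stmt5 (a b c : ℕ) (ha : 0 < a) (hb : 0 < b) (hc : 0 < c)
    (hab : Nat.Coprime a b) (hac : Nat.Coprime a c) (hbc : Nat.Coprime b c)
    (h : c ^ 2 = a ^ 2 + b ^ 2 + a * b)
    (hsa : Squarefree a) (hsb : Squarefree b)
    (X : ℝ) (hX : 0 < X) (N : ℕ) (hN : 0 < N)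
    (htile : TilesInto (EquilateralTri X) N a b c) :
    ∃ m : ℕ, 0 < m ∧ X = (m : ℝ) * a * b := by
  obtain ⟨f, Δ, ⟨P, Q, R, h1, h2, h3, rfl⟩, hS, hdisj⟩ := htile
  have himg : ∀ i, f i '' (convexHull ℝ {P, Q, R}) =
      convexHull ℝ {f i P, f i Q, f i R} := by
    intro i
    have := ((f i).toRealAffineIsometryEquiv.toAffineEquiv.toAffineMap).image_convexHull {P, Q, R}
    simpa [image_insert_eq] using this
  simp only [himg] at hS hdisj
  have hR : (c:ℝ) ^ 2 = (a:ℝ) ^ 2 + (b:ℝ) ^ 2 + a * b := by exact_mod_cast h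
  have g1 : ∀ i, dist (f i Q) (f i R) = a := fun i => by rw [(f i).dist_eq, h1]
  have g2 : ∀ i, dist (f i P) (f i R) = b := fun i => by rw [(f i).dist_eq, h2]
  have g3 : ∀ i, dist (f i P) (f i Q) = c := fun i => by rw [(f i).dist_eq, h3]
  have hab0 : (0:ℝ) < a * b := by positivity
  have hdt : ∀ i, |dt (f i P) (f i Q) (f i R)| = Real.sqrt 3 / 2 * (a * b) := by
    intro i
    rw [← Real.sqrt_sq_eq_abs, dt_sq _ _ _ _ _ _ (g1 i) (g2 i) (g3 i) hR,
      ← Real.sqrt_sq (by positivity : 0 ≤ Real.sqrt 3 / 2 * (a * b : ℝ))]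
    congr 1
    have h5 : Real.sqrt 3 ^ 2 = 3 := Real.sq_sqrt (by norm_num)
    linear_combination (-(a * b : ℝ) ^ 2 / 4) * h5
  have hdt0 : ∀ i, dt (f i P) (f i Q) (f i R) ≠ 0 := by
    intro i h0
    have := hdt i
    rw [h0, abs_zero] at this
    have : 0 < Real.sqrt 3 / 2 * (a * b : ℝ) := by positivity
    linarith
  have hconv : ∀ i, Convex ℝ (convexHull ℝ {f i P, f i Q, f i R}) := fun i => convex_convexHull _ _
  have hclosed : ∀ i, IsClosed (convexHull ℝ {f i P, f i Q, f i R}) :=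
    fun i => (compact_tri _ _ _).isClosed
  -- area
  have harea : X ^ 2 = N * (a * b) := by
    have hv : volume (EquilateralTri X) = ∑ i, volume (convexHull ℝ {f i P, f i Q, f i R}) := by
      rw [hS, measure_iUnion₀, tsum_fintype]
      · intro i j hij
        exact aedisj _ (hconv i) (hconv j) (hdisj i j hij)
      · exact fun i => (hclosed i).measurableSet.nullMeasurableSet
    rw [EquilateralTri, vol_tri] at hv
    simp only [vol_tri, hdt] at hv
    rw [← Finset.sum_mul, ENNReal.mul_left_inj T0_ne_zero T0_ne_top,
      ← ENNReal.ofReal_sum_of_nonneg (fun _ _ => by positivity),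
      ENNReal.ofReal_eq_ofReal_iff (by positivity) (by positivity)] at hv
    have e : dt (pt 0 0) (pt X 0) (pt (X / 2) (X * Real.sqrt 3 / 2)) = Real.sqrt 3 / 2 * X ^ 2 := by
      simp [dt, pt]; ring
    rw [e, abs_of_nonneg (by positivity)] at hv
    simp only [Finset.sum_const, Finset.card_univ, Fintype.card_fin, nsmul_eq_mul] at hv
    have h3 : Real.sqrt 3 / 2 ≠ 0 := by positivity
    apply mul_left_cancel₀ h3
    linarith
  have hS0 : ∀ z ∈ EquilateralTri X, 0 ≤ z 1 := by
    intro z hz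
    obtain ⟨s, t, hs, ht, hst, h0, h1⟩ := tri_y hz
    rw [h1]
    simp [pt]
    positivity
  have hsub : ∀ i, convexHull ℝ {f i P, f i Q, f i R} ⊆ EquilateralTri X := by
    intro i
    rw [hS]
    exact subset_iUnion (fun i => convexHull ℝ {f i P, f i Q, f i R}) i
  have hT0 : ∀ i, ∀ z ∈ convexHull ℝ {f i P, f i Q, f i R}, 0 ≤ z 1 :=
    fun i z hz => hS0 z (hsub i hz)
  have hint : ∀ i, (interior (convexHull ℝ {f i P, f i Q, f i R})).Nonempty := by
    intro i
    rw [nonempty_iff_ne_empty]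
    intro he
    have hf := (hconv i).addHaar_frontier volume
    rw [frontier, he, sdiff_empty, (hclosed i).closure_eq, vol_tri] at hf
    have h4 : ENNReal.ofReal |dt (f i P) (f i Q) (f i R)| ≠ 0 := by
      simpa using hdt0 i
    exact mul_ne_zero h4 T0_ne_zero hf
  -- side
  have hside : ∃ n : ℕ, X = n := by
    have hn : ∀ i, ∃ n : ℕ, volume (slice (convexHull ℝ {f i P, f i Q, f i R})) = n := by
      intro i
      have hm : ∀ z ∈ ({f i P, f i Q, f i R} : Set Plane), 0 ≤ z 1 :=
        fun z hz => hT0 i z (subset_convexHull ℝ _ hz)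
      exact slice_tri (hm _ (by simp)) (hm _ (by simp)) (hm _ (by simp)) (hdt0 i) a b c
        (g1 i) (g2 i) (g3 i)
    choose n hn using hn
    have hu : slice (EquilateralTri X) = ⋃ i, slice (convexHull ℝ {f i P, f i Q, f i R}) := by
      rw [hS]; ext x; simp [slice]
    have hv : volume (slice (EquilateralTri X)) =
        ∑ i, volume (slice (convexHull ℝ {f i P, f i Q, f i R})) := by
      rw [hu, measure_iUnion₀, tsum_fintype]
      · intro i j hij
        refine aedisj _ (slice_convex (hconv i)) (slice_convex (hconv j)) ?_
        rw [← not_nonempty_iff_eq_empty]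
        rintro ⟨x, hxi, hxj⟩
        obtain ⟨y, hy⟩ := ((slice_interior (hconv i) (hT0 i) (hint i) hxi).and
          (slice_interior (hconv j) (hT0 j) (hint j) hxj)).exists
        have : pt x y ∈ (∅ : Set Plane) := by
          rw [← hdisj i j hij]; exact hy
        exact this
      · exact fun i => (slice_closed (hclosed i)).measurableSet.nullMeasurableSet
    rw [EquilateralTri, slice_two (by simp [pt]) (by simp [pt]) (by simp [pt]; positivity)] at hv
    have hd : dist (pt 0 0) (pt X 0) = X := by
      rw [← Real.sqrt_sq (dist_nonneg (x := pt 0 0) (y := pt X 0)), dist_sq]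
      simp [pt, Real.sqrt_sq hX.le]
    rw [hd] at hv
    simp only [hn] at hv
    refine ⟨∑ i, n i, ?_⟩
    rw [← Nat.cast_sum] at hv
    have := congrArg ENNReal.toReal hv
    rw [ENNReal.toReal_ofReal hX.le, ENNReal.toReal_natCast] at this
    exact this
  obtain ⟨n, rfl⟩ := hside
  have hnat : n ^ 2 = N * (a * b) := by exact_mod_cast harea
  have hsq : Squarefree (a * b) := (Nat.squarefree_mul hab).2 ⟨hsa, hsb⟩
  have hdvd : a * b ∣ n := (hsq.dvd_pow_iff_dvd two_ne_zero).1 (Dvd.intro_left _ hnat.symm)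
  obtain ⟨m, rfl⟩ := hdvd
  refine ⟨m, ?_, by push_cast; ring⟩
  rcases Nat.eq_zero_or_pos m with rfl | hm
  · simp at hX
  · exact hm
end
end
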